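/- arXiv:1304.0431 — 6 statements merged into one kernel-verified Lean document; each statement's English description precedes it below -/
import Mathlib

section
/- Let f : I ⊆ (0,∞) → (0,∞) be differentiable on I°, a, b ∈ I° with a < b, f' integrable on [a,b], and let |f'|^q be s-geometrically convex on [a,b] for some q ≥ 1 and s ∈ (0,1]. If |f'(b)| ≤ 1 ≤ |f'(a)|, then |f(√(ab))² − (1/(ln b − ln a)) ∫_a^b (f(x)/x)·f(ab/x) dx| ≤ ln(b/a)·(1/2)^{2−1/q}·[ b·|f'(b)|^s·|f'(a)|^{1−s}·M₁·h₂(θ)^{1/q} + a·|f'(a)|·M₂·h₂(ϑ)^{1/q} ]. -/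
/-!
Put `A = log a`, `B = log b` and
`Ψ t = f (exp (A + (B - A) / 2 * t)) * f (exp (B - (B - A) / 2 * t))`.
In the variable `log x` the integrand is symmetric about the midpoint, so the logarithmic mean
equals `∫₀¹ Ψ` (`integral_eq_param`), while `Ψ 1 = f (√(ab)) ^ 2`. Integration by parts gives
`Ψ 1 - ∫₀¹ Ψ = ∫₀¹ t Ψ' t`, so it suffices to bound `Ψ'` (`abs_sub_integral_le`).

Since `|f' b| ≤ 1 ≤ |f' a|`, `s`-geometric convexity yields a bound on `|f'|` with affine exponents
(`le_of_geometric_bound`), whence `|Ψ' t|` is at most a combination of `w₁ ^ t` and `w₂ ^ t` with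
`w₁ ^ q = θ` and `w₂ ^ q = ϑ`. The power-mean inequality for the weight `t` on `[0, 1]`, together
with `∫₀¹ t v ^ t = h₂ v`, gives the claim (`integral_id_mul_rpow_le`).

If `f' b` were zero, the conventions `x / 0 = 0` and `log 0 = 0` would make the right side vanish;
`deriv_right_ne_zero` shows that the hypotheses exclude this.
-/

open Real MeasureTheory Set intervalIntegral

noncomputable def h₂ (u : ℝ) : ℝ :=
  if u = 1 then 1/2 else (u * Real.log u - u + 1) / (Real.log u) ^ 2

/-! ### Weighted integrals of exponentials -/

theorem integral_id_mul_rpow {v : ℝ} (hv : 0 < v) :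
    ∫ t in (0:ℝ)..1, t * v ^ t = h₂ v := by
  unfold h₂
  split_ifs with h
  · subst h; simp
  · have hl : Real.log v ≠ 0 := by
      simpa [Real.log_eq_zero, hv.ne', h] using (by linarith : v ≠ -1)
    have key : ∀ t ∈ uIcc (0:ℝ) 1, HasDerivAt
        (fun t : ℝ => t * v ^ t / Real.log v - v ^ t / (Real.log v) ^ 2) (t * v ^ t) t := by
      intro t _
      have h1 : HasDerivAt (fun t : ℝ => v ^ t) (v ^ t * Real.log v) t := by
        simpa using (Real.hasStrictDerivAt_const_rpow hv t).hasDerivAt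
      have h2 := (((hasDerivAt_id t).mul h1).div_const (Real.log v)).sub
        (h1.div_const ((Real.log v) ^ 2))
      refine h2.congr_deriv ?_
      simp only [id]
      field_simp
      ring
    rw [intervalIntegral.integral_eq_sub_of_hasDerivAt key]
    · simp
      field_simp
    · exact (continuous_id.mul
        (Real.continuous_const_rpow hv.ne')).intervalIntegrable _ _

/-- The power-mean (Jensen) inequality for the weight `t` on `[0, 1]`, whose total mass is `1/2`. -/
theorem integral_id_mul_rpow_le {w q : ℝ} (hw : 0 < w) (hq : 1 ≤ q) :
    ∫ t in (0:ℝ)..1, t * w ^ t ≤ ((1:ℝ) / 2) ^ (1 - 1 / q) * (h₂ (w ^ q)) ^ (1 / q) := by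
  have hq0 : 0 < q := by linarith
  have hcw : Continuous fun t : ℝ => w ^ t := Real.continuous_const_rpow hw.ne'
  have hcv : Continuous fun t : ℝ => (w ^ q) ^ t :=
    Real.continuous_const_rpow (Real.rpow_pos_of_pos hw q).ne'
  set J := ∫ t in (0:ℝ)..1, t * w ^ t with hJ
  have hJpos : 0 < J := by
    refine intervalIntegral.intervalIntegral_pos_of_pos_on
      ((continuous_id.mul hcw).intervalIntegrable _ _) ?_ zero_lt_one
    intro t ht
    exact mul_pos ht.1 (Real.rpow_pos_of_pos hw t)
  -- `m` is the weighted mean of `w ^ t`; the power function lies above its tangent line at `m`.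
  set m := 2 * J with hm
  have hmpos : 0 < m := by positivity
  have tangent : ∀ t : ℝ, m ^ q + q * m ^ (q - 1) * (w ^ t - m) ≤ (w ^ q) ^ t := by
    intro t
    have hwt : 0 < w ^ t := Real.rpow_pos_of_pos hw t
    have h1 : -1 ≤ w ^ t / m - 1 := by
      have : 0 < w ^ t / m := by positivity
      linarith
    have h2 := one_add_mul_self_le_rpow_one_add h1 hq
    rw [add_sub_cancel, Real.div_rpow hwt.le hmpos.le, le_div_iff₀ (by positivity)] at h2
    have h3 : m ^ q = m ^ (q - 1) * m := by
      rw [← Real.rpow_add_one hmpos.ne']; ring_nf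
    have h4 : (w ^ q) ^ t = (w ^ t) ^ q := by
      rw [← Real.rpow_mul hw.le, ← Real.rpow_mul hw.le, mul_comm]
    rw [h4]
    refine le_trans (le_of_eq ?_) h2
    rw [h3]
    field_simp
  have hint : m ^ q / 2 ≤ h₂ (w ^ q) := by
    rw [← integral_id_mul_rpow (Real.rpow_pos_of_pos hw q)]
    have hc : ∫ t in (0:ℝ)..1, ((m ^ q - q * m ^ (q - 1) * m) * t +
        q * m ^ (q - 1) * (t * w ^ t)) = m ^ q / 2 := by
      rw [intervalIntegral.integral_add, intervalIntegral.integral_const_mul,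
        intervalIntegral.integral_const_mul, ← hJ, integral_id]
      · rw [hm]; ring
      · exact Continuous.intervalIntegrable (by fun_prop) _ _
      · exact Continuous.intervalIntegrable (by fun_prop) _ _
    rw [← hc]
    refine intervalIntegral.integral_mono_on zero_le_one
      (Continuous.intervalIntegrable (by fun_prop) _ _)
      (Continuous.intervalIntegrable (by fun_prop) _ _) ?_
    intro t ht
    have := mul_le_mul_of_nonneg_left (tangent t) ht.1
    linarith
  have h5 : m * ((1:ℝ) / 2) ^ (1 / q) ≤ (h₂ (w ^ q)) ^ (1 / q) := by
    have := Real.rpow_le_rpow (by positivity) hint (by positivity : 0 ≤ 1 / q)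
    refine le_trans (le_of_eq ?_) this
    rw [div_eq_mul_one_div (m ^ q) 2, Real.mul_rpow (by positivity) (by positivity),
      ← Real.rpow_mul hmpos.le, mul_one_div_cancel hq0.ne', Real.rpow_one]
  calc J = ((1:ℝ) / 2) ^ (1 - 1 / q) * (m * ((1:ℝ) / 2) ^ (1 / q)) := by
        rw [mul_left_comm, ← Real.rpow_add (by norm_num)]
        simp [hm]
        ring
    _ ≤ _ := mul_le_mul_of_nonneg_left h5 (by positivity)

/-! ### Comparing an endpoint value with a mean value -/

/-- Since `Ψ 1 - ∫ Ψ = ∫ t Ψ'`, a pointwise bound on `Ψ'` gives one on the left side. The proof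
compares derivatives of `t Ψ(t) - ∫₀ᵗ Ψ` and `∫₀ᵗ τ g(τ)`, so that `Ψ'` need not be integrable. -/
theorem abs_sub_integral_le {Ψ Ψ' g : ℝ → ℝ} (hΨ : ∀ t ∈ Icc (0:ℝ) 1, HasDerivAt Ψ (Ψ' t) t)
    (hg : Continuous g) (hb : ∀ t ∈ Icc (0:ℝ) 1, |Ψ' t| ≤ g t) :
    |Ψ 1 - ∫ t in (0:ℝ)..1, Ψ t| ≤ ∫ t in (0:ℝ)..1, t * g t := by
  have hcont : ContinuousOn Ψ (Icc 0 1) := fun t ht => (hΨ t ht).continuousAt.continuousWithinAt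
  -- a globally continuous extension of `Ψ` from `[0, 1]`
  set E : ℝ → ℝ := IccExtend zero_le_one ((Icc (0:ℝ) 1).domRestrict Ψ) with hE
  have hEc : Continuous E := hcont.domRestrict.Icc_extend'
  have hEeq : ∀ t ∈ Icc (0:ℝ) 1, E t = Ψ t := fun t ht => by
    rw [hE, IccExtend_of_mem _ _ ht]; rfl
  have hEint : ∫ t in (0:ℝ)..1, Ψ t = ∫ t in (0:ℝ)..1, E t := by
    refine intervalIntegral.integral_congr fun t ht => ?_
    rw [uIcc_of_le zero_le_one] at ht
    exact (hEeq t ht).symm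
  have hd : ∀ t ∈ Icc (0:ℝ) 1,
      HasDerivAt (fun t => t * Ψ t - ∫ τ in (0:ℝ)..t, E τ) (t * Ψ' t) t := by
    intro t ht
    refine (((hasDerivAt_id t).mul (hΨ t ht)).sub
      (hEc.integral_hasStrictDerivAt 0 t).hasDerivAt).congr_deriv ?_
    rw [hEeq t ht]; simp
  have hB : ∀ t : ℝ, HasDerivAt (fun t => ∫ τ in (0:ℝ)..t, τ * g τ) (t * g t) t := fun t =>
    ((continuous_id.mul hg).integral_hasStrictDerivAt 0 t).hasDerivAt
  have := image_norm_le_of_norm_deriv_right_le_deriv_boundary (a := 0) (b := 1)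
    (fun t ht => (hd t ht).continuousAt.continuousWithinAt)
    (fun t ht => (hd t (Ico_subset_Icc_self ht)).hasDerivWithinAt) (by simp) hB
    (fun t ht => by
      rw [norm_mul, Real.norm_of_nonneg ht.1, Real.norm_eq_abs]
      exact mul_le_mul_of_nonneg_left (hb t (Ico_subset_Icc_self ht)) ht.1)
    (right_mem_Icc.2 zero_le_one)
  rw [hEint]
  simpa using this

/-! ### Linearizing the exponents of geometric convexity -/

/-- For `r ≤ 1 ≤ p` the exponents `l ^ s` and `(1 - l) ^ s` can be replaced by the affine ones
`s * l + 1 - s ≥ l ^ s` (a tangent line) and `s * (1 - l) ≤ (1 - l) ^ s`. -/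
theorem le_of_geometric_bound {p r y l s q : ℝ} (hp : 1 ≤ p) (hr0 : 0 < r) (hr : r ≤ 1)
    (hy : 0 ≤ y) (hq : 1 ≤ q) (hs : s ∈ Ioc (0:ℝ) 1) (hl : l ∈ Icc (0:ℝ) 1)
    (h : y ^ q ≤ (p ^ q) ^ (l ^ s) * (r ^ q) ^ ((1 - l) ^ s)) :
    y ≤ p ^ (s * l + 1 - s) * r ^ (s * (1 - l)) := by
  have hq0 : 0 < q := by linarith
  have hp0 : 0 < p := by linarith
  have e1 : l ^ s ≤ s * l + 1 - s := by
    have := rpow_one_add_le_one_add_mul_self (s := l - 1) (by linarith [hl.1]) hs.1.le hs.2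
    rw [add_sub_cancel] at this
    linarith
  have e2 : s * (1 - l) ≤ (1 - l) ^ s := by
    rcases eq_or_lt_of_le hl.2 with h1 | h1
    · subst h1; simp [Real.zero_rpow hs.1.ne']
    · have h2 : (1 - l) ^ (1:ℝ) ≤ (1 - l) ^ s :=
        Real.rpow_le_rpow_of_exponent_ge (by linarith) (by linarith [hl.1]) hs.2
      rw [Real.rpow_one] at h2
      nlinarith [hs.2]
  have h1 : y ^ q ≤ (p ^ (l ^ s) * r ^ ((1 - l) ^ s)) ^ q := by
    refine h.trans (le_of_eq ?_)
    rw [Real.mul_rpow (by positivity) (by positivity), ← Real.rpow_mul hp0.le,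
      ← Real.rpow_mul hr0.le, ← Real.rpow_mul hp0.le, ← Real.rpow_mul hr0.le, mul_comm q,
      mul_comm q]
  have h2 := (Real.rpow_le_rpow_iff hy (by positivity) hq0).1 h1
  refine h2.trans ?_
  exact mul_le_mul (Real.rpow_le_rpow_of_exponent_le hp e1)
    (Real.rpow_le_rpow_of_exponent_ge hr0 hr e2) (by positivity) (by positivity)

/-! ### Change of variables -/

/-- Logarithmic substitution: in the variable `log x` the integrand is symmetric about the
midpoint of `[A, B]`, so the mean over `[A, B]` is the mean over the left half. -/
theorem integral_eq_param {f : ℝ → ℝ} {A B : ℝ} (hAB : A < B)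
    (hf : ContinuousOn f (Icc (exp A) (exp B))) :
    (1 / (B - A)) * ∫ x in (exp A)..(exp B), (f x / x) * f (exp A * exp B / x)
      = ∫ t in (0:ℝ)..1, f (exp (A + (B - A) / 2 * t)) * f (exp (B - (B - A) / 2 * t)) := by
  have hmem : ∀ u ∈ Icc A B, exp u ∈ Icc (exp A) (exp B) := fun u hu =>
    ⟨exp_le_exp.2 hu.1, exp_le_exp.2 hu.2⟩
  set ψ : ℝ → ℝ := fun u => f (exp u) * f (exp (A + B - u)) with hψ
  have hψc : ContinuousOn ψ (Icc A B) := by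
    refine (hf.comp continuous_exp.continuousOn hmem).mul
      (hf.comp (continuous_exp.comp (continuous_const.sub continuous_id)).continuousOn ?_)
    intro u hu
    exact hmem _ ⟨by linarith [hu.2], by linarith [hu.1]⟩
  have hsub : ∫ x in (exp A)..(exp B), (f x / x) * f (exp A * exp B / x) = ∫ u in A..B, ψ u := by
    rw [← intervalIntegral.integral_comp_mul_deriv'' (f := exp) (f' := exp)
      continuous_exp.continuousOn (fun x _ => (Real.hasDerivAt_exp x).hasDerivWithinAt)
      continuous_exp.continuousOn]
    · refine intervalIntegral.integral_congr fun u _ => ?_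
      simp only [hψ, Function.comp, ← exp_add, ← exp_sub]
      field_simp
    · have himg : exp '' uIcc A B ⊆ Icc (exp A) (exp B) := by
        rw [uIcc_of_le hAB.le]
        rintro _ ⟨u, hu, rfl⟩
        exact hmem u hu
      have hne : ∀ x ∈ exp '' uIcc A B, x ≠ 0 := by
        rintro _ ⟨u, _, rfl⟩
        exact (exp_pos u).ne'
      refine ((hf.mono himg).div continuousOn_id hne).mul
        (hf.comp (continuousOn_const.div continuousOn_id hne) ?_)
      rintro _ ⟨u, hu, rfl⟩
      rw [uIcc_of_le hAB.le] at hu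
      simp only [← exp_add, ← exp_sub]
      exact hmem _ ⟨by linarith [hu.2], by linarith [hu.1]⟩
  have hii : ∀ {c d : ℝ}, c ∈ Icc A B → d ∈ Icc A B → IntervalIntegrable ψ volume c d := by
    intro c d hc hd
    exact (hψc.mono ((ordConnected_Icc).uIcc_subset hc hd)).intervalIntegrable
  have hC : (A + B) / 2 ∈ Icc A B := ⟨by linarith, by linarith⟩
  have hsymm : ∫ u in ((A + B) / 2)..B, ψ u = ∫ u in A..((A + B) / 2), ψ u := by
    have h1 := intervalIntegral.integral_comp_sub_left (a := A) (b := (A + B) / 2) ψ (A + B)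
    rw [show A + B - (A + B) / 2 = (A + B) / 2 by ring, show A + B - A = B by ring] at h1
    rw [← h1]
    refine intervalIntegral.integral_congr fun u _ => ?_
    simp only [hψ, sub_sub_cancel]
    exact mul_comm _ _
  have hpar := intervalIntegral.mul_integral_comp_add_mul (a := 0) (b := 1) (f := ψ)
    ((B - A) / 2) A
  rw [mul_zero, add_zero, mul_one, show A + (B - A) / 2 = (A + B) / 2 by ring] at hpar
  rw [hsub, ← intervalIntegral.integral_add_adjacent_intervals
    (hii (left_mem_Icc.2 hAB.le) hC) (hii hC (right_mem_Icc.2 hAB.le)), hsymm, ← hpar]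
  have hL : B - A ≠ 0 := by linarith
  have : ∀ X : ℝ, 1 / (B - A) * ((B - A) / 2 * X + (B - A) / 2 * X) = X := by
    intro X; field_simp; ring
  rw [this]
  refine intervalIntegral.integral_congr fun t _ => ?_
  simp only [hψ]
  congr 3
  ring

/-! ### The degenerate case -/

/-- A vanishing `f' b` forces `f' = 0` on `(a, b]`; then `f` is constant on `[a, b]`, which
contradicts `1 ≤ |f' a|`. -/
theorem deriv_right_ne_zero {f f' : ℝ → ℝ} {a b q s : ℝ} (ha : 0 < a) (hab : a < b)
    (hf : ∀ x ∈ Icc a b, HasDerivAt f (f' x) x) (hq : 1 ≤ q)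
    (hconv : ∀ x ∈ Set.Icc a b, ∀ y ∈ Set.Icc a b, ∀ l ∈ Set.Icc (0:ℝ) 1,
      |f' (x ^ l * y ^ (1 - l))| ^ q ≤ (|f' x| ^ q) ^ (l ^ s) * (|f' y| ^ q) ^ ((1 - l) ^ s))
    (hfa : 1 ≤ |f' a|) : f' b ≠ 0 := by
  intro hb0
  have hb : 0 < b := ha.trans hab
  have hq0 : 0 < q := by linarith
  have hzero : ∀ x ∈ Ioc a b, f' x = 0 := by
    intro x hx
    have hx0 : 0 < x := ha.trans hx.1
    have hL : 0 < log b - log a := sub_pos.2 (log_lt_log ha hab)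
    have hxa := log_lt_log ha hx.1
    have hxb := log_le_log hx0 hx.2
    -- `l` is the position of `x` between `b` and `a` on the logarithmic scale
    set l := (log b - log x) / (log b - log a) with hl
    have hl0 : 0 ≤ l := div_nonneg (by linarith) hL.le
    have hl1 : l < 1 := (div_lt_one hL).2 (by linarith)
    have hxl : a ^ l * b ^ (1 - l) = x := by
      rw [Real.rpow_def_of_pos ha, Real.rpow_def_of_pos hb, ← exp_add, ← exp_log hx0]
      congr 1
      rw [hl]
      field_simp
      ring
    have h := hconv a (left_mem_Icc.2 hab.le) b (right_mem_Icc.2 hab.le) l ⟨hl0, hl1.le⟩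
    rw [hxl, hb0, abs_zero, Real.zero_rpow hq0.ne',
      Real.zero_rpow (Real.rpow_pos_of_pos (by linarith) s).ne', mul_zero] at h
    by_contra hne
    exact absurd h (not_le.2 (Real.rpow_pos_of_pos (abs_pos.2 hne) q))
  have hconst : ∀ x ∈ Icc a b, f x = f a := by
    intro x hx
    rcases eq_or_lt_of_le hx.1 with h | h
    · rw [h]
    · obtain ⟨c, hc, hc'⟩ := exists_hasDerivAt_eq_slope f f' h
        (fun y hy => (hf y ⟨hy.1, hy.2.trans hx.2⟩).continuousAt.continuousWithinAt)
        (fun y hy => hf y ⟨hy.1.le, hy.2.le.trans hx.2⟩)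
      rw [hzero c ⟨hc.1, hc.2.le.trans hx.2⟩, eq_comm, div_eq_zero_iff] at hc'
      rcases hc' with h1 | h1 <;> linarith
  have hmem : a ∈ Icc a b := left_mem_Icc.2 hab.le
  have h0 : HasDerivWithinAt f 0 (Icc a b) a :=
    (hasDerivWithinAt_const a (Icc a b) (f a)).congr hconst rfl
  have := (uniqueDiffOn_Icc hab a hmem).eq_deriv _ (hf a hmem).hasDerivWithinAt h0
  rw [this, abs_zero] at hfa
  linarith

/-! ### The inequality -/

theorem stmt_9 (I : Set ℝ) (hI : I ⊆ Set.Ioi (0:ℝ)) (hI' : I.OrdConnected)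
    (f f' : ℝ → ℝ) (a b : ℝ) (ha : a ∈ interior I) (hb : b ∈ interior I) (hab : a < b)
    (hf : ∀ x ∈ interior I, HasDerivAt f (f' x) x)
    (hint : IntervalIntegrable f' volume a b)
    (hpos : ∀ x ∈ I, 0 < f x)
    (q s : ℝ) (hq : 1 ≤ q) (hs : s ∈ Set.Ioc (0:ℝ) 1)
    (hconv : ∀ x ∈ Set.Icc a b, ∀ y ∈ Set.Icc a b, ∀ l ∈ Set.Icc (0:ℝ) 1,
      |f' (x ^ l * y ^ (1 - l))| ^ q ≤ (|f' x| ^ q) ^ (l ^ s) * (|f' y| ^ q) ^ ((1 - l) ^ s))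
    (M₁ M₂ : ℝ)
    (hM₁ : IsGreatest ((fun x => |f x|) '' Set.Icc a (Real.sqrt (a*b))) M₁)
    (hM₂ : IsGreatest ((fun x => |f x|) '' Set.Icc (Real.sqrt (a*b)) b) M₂)
    (hfb : |f' b| ≤ 1) (hfa : 1 ≤ |f' a|) :
    |f (Real.sqrt (a*b)) ^ 2 - (1 / (Real.log b - Real.log a)) * ∫ x in a..b, (f x / x) * f (a * b / x)|
      ≤ Real.log (b / a) * ((1:ℝ) / 2) ^ (2 - 1 / q) *
        (b * |f' b| ^ s * |f' a| ^ (1 - s) * M₁ * (h₂ ((a * |f' a| ^ s / (b * |f' b| ^ s)) ^ (q / 2))) ^ (1 / q)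
          + a * |f' a| * M₂ * (h₂ ((b * |f' b| ^ s / (a * |f' a| ^ s)) ^ (q / 2))) ^ (1 / q)) := by
  have ha0 : 0 < a := hI (interior_subset ha)
  have hb0 : 0 < b := ha0.trans hab
  have hsubI : Icc a b ⊆ interior I := hI'.interior.out ha hb
  have hfab : ∀ x ∈ Icc a b, HasDerivAt f (f' x) x := fun x hx => hf x (hsubI hx)
  have hr0 : 0 < |f' b| := abs_pos.2 (deriv_right_ne_zero ha0 hab hfab hq hconv hfa)
  have hp0 : 0 < |f' a| := by linarith
  obtain ⟨A, rfl⟩ : ∃ A, exp A = a := ⟨log a, exp_log ha0⟩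
  obtain ⟨B, rfl⟩ : ∃ B, exp B = b := ⟨log b, exp_log hb0⟩
  have hAB : A < B := exp_lt_exp.1 hab
  have hsqrt : Real.sqrt (exp A * exp B) = exp ((A + B) / 2) := by
    rw [← exp_add, Real.sqrt_eq_iff_mul_self_eq (exp_pos _).le (exp_pos _).le, ← exp_add]
    ring_nf
  rw [hsqrt] at hM₁ hM₂ ⊢
  have hL : 0 < (B - A) / 2 := by linarith
  obtain ⟨P, hP⟩ : ∃ P, exp P = |f' (exp A)| := ⟨_, exp_log hp0⟩
  obtain ⟨R, hR⟩ : ∃ R, exp R = |f' (exp B)| := ⟨_, exp_log hr0⟩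
  -- the geometric ratios along the two half-intervals
  set w₁ : ℝ := (exp A * |f' (exp A)| ^ s / (exp B * |f' (exp B)| ^ s)) ^ ((1:ℝ) / 2) with hw₁
  set w₂ : ℝ := (exp B * |f' (exp B)| ^ s / (exp A * |f' (exp A)| ^ s)) ^ ((1:ℝ) / 2) with hw₂
  have hw₁0 : 0 < w₁ := by positivity
  have hw₂0 : 0 < w₂ := by positivity
  set K₁ : ℝ := exp B * |f' (exp B)| ^ s * |f' (exp A)| ^ (1 - s) with hK₁
  set K₂ : ℝ := exp A * |f' (exp A)| with hK₂
  have hθ : (exp A * |f' (exp A)| ^ s / (exp B * |f' (exp B)| ^ s)) ^ (q / 2) = w₁ ^ q := by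
    rw [hw₁, ← Real.rpow_mul (by positivity)]; ring_nf
  have hϑ : (exp B * |f' (exp B)| ^ s / (exp A * |f' (exp A)| ^ s)) ^ (q / 2) = w₂ ^ q := by
    rw [hw₂, ← Real.rpow_mul (by positivity)]; ring_nf
  rw [hθ, hϑ, Real.log_div hb0.ne' ha0.ne', Real.log_exp, Real.log_exp,
    integral_eq_param hAB fun x hx => (hfab x hx).continuousAt.continuousWithinAt]
  have hder : ∀ l ∈ Icc (0:ℝ) 1, |f' (exp (l * A + (1 - l) * B))| ≤
      exp (P * (s * l + 1 - s) + R * (s * (1 - l))) := by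
    intro l hl
    have h := hconv _ (left_mem_Icc.2 hab.le) _ (right_mem_Icc.2 hab.le) l hl
    have h1 := le_of_geometric_bound hfa hr0 hfb (abs_nonneg _) hq hs hl h
    rw [← hP, ← hR, ← exp_mul, ← exp_mul, ← exp_mul, ← exp_mul, ← exp_add, ← exp_add] at h1
    convert h1 using 4
    ring
  have hb₂ : ∀ t ∈ Icc (0:ℝ) 1, exp (A + (B - A) / 2 * t) * |f' (exp (A + (B - A) / 2 * t))|
      ≤ K₂ * w₂ ^ t := by
    intro t ht
    have h := hder (1 - t / 2) ⟨by linarith [ht.2], by linarith [ht.1]⟩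
    rw [show (1 - t / 2) * A + (1 - (1 - t / 2)) * B = A + (B - A) / 2 * t by ring] at h
    refine (mul_le_mul_of_nonneg_left h (exp_pos _).le).trans (le_of_eq ?_)
    rw [hK₂, hw₂, ← hP, ← hR]
    simp only [← exp_mul, ← exp_add, ← exp_sub]
    ring_nf
  have hb₁ : ∀ t ∈ Icc (0:ℝ) 1, exp (B - (B - A) / 2 * t) * |f' (exp (B - (B - A) / 2 * t))|
      ≤ K₁ * w₁ ^ t := by
    intro t ht
    have h := hder (t / 2) ⟨by linarith [ht.1], by linarith [ht.2]⟩
    rw [show t / 2 * A + (1 - t / 2) * B = B - (B - A) / 2 * t by ring] at h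
    refine (mul_le_mul_of_nonneg_left h (exp_pos _).le).trans (le_of_eq ?_)
    rw [hK₁, hw₁, ← hP, ← hR]
    simp only [← exp_mul, ← exp_add, ← exp_sub]
    ring_nf
  have hx₁ : ∀ t ∈ Icc (0:ℝ) 1,
      exp (A + (B - A) / 2 * t) ∈ Icc (exp A) (exp ((A + B) / 2)) := fun t ht =>
    ⟨exp_le_exp.2 (by nlinarith [ht.1]), exp_le_exp.2 (by nlinarith [ht.2])⟩
  have hx₂ : ∀ t ∈ Icc (0:ℝ) 1,
      exp (B - (B - A) / 2 * t) ∈ Icc (exp ((A + B) / 2)) (exp B) := fun t ht =>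
    ⟨exp_le_exp.2 (by nlinarith [ht.2]), exp_le_exp.2 (by nlinarith [ht.1])⟩
  have hC₁ : exp A ≤ exp ((A + B) / 2) := exp_le_exp.2 (by linarith)
  have hC₂ : exp ((A + B) / 2) ≤ exp B := exp_le_exp.2 (by linarith)
  have hf₁ : ∀ t ∈ Icc (0:ℝ) 1, |f (exp (A + (B - A) / 2 * t))| ≤ M₁ := fun t ht =>
    hM₁.2 ⟨_, hx₁ t ht, rfl⟩
  have hf₂ : ∀ t ∈ Icc (0:ℝ) 1, |f (exp (B - (B - A) / 2 * t))| ≤ M₂ := fun t ht =>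
    hM₂.2 ⟨_, hx₂ t ht, rfl⟩
  have hM₁0 : 0 ≤ M₁ := (abs_nonneg _).trans (hf₁ 0 (left_mem_Icc.2 zero_le_one))
  have hM₂0 : 0 ≤ M₂ := (abs_nonneg _).trans (hf₂ 0 (left_mem_Icc.2 zero_le_one))
  have hcw₁ : Continuous fun t : ℝ => w₁ ^ t := Real.continuous_const_rpow hw₁0.ne'
  have hcw₂ : Continuous fun t : ℝ => w₂ ^ t := Real.continuous_const_rpow hw₂0.ne'
  have main := abs_sub_integral_le
    (Ψ := fun t => f (exp (A + (B - A) / 2 * t)) * f (exp (B - (B - A) / 2 * t)))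
    (Ψ' := fun t =>
      f' (exp (A + (B - A) / 2 * t)) * (exp (A + (B - A) / 2 * t) * ((B - A) / 2)) *
          f (exp (B - (B - A) / 2 * t)) +
        f (exp (A + (B - A) / 2 * t)) *
          (f' (exp (B - (B - A) / 2 * t)) * (exp (B - (B - A) / 2 * t) * (-((B - A) / 2)))))
    (g := fun t => (B - A) / 2 * (K₂ * w₂ ^ t * M₂ + M₁ * (K₁ * w₁ ^ t)))
    (fun t ht => by
      have d₁ : HasDerivAt (fun t => A + (B - A) / 2 * t) ((B - A) / 2) t := by
        simpa using ((hasDerivAt_id t).const_mul ((B - A) / 2)).const_add A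
      have d₂ : HasDerivAt (fun t => B - (B - A) / 2 * t) (-((B - A) / 2)) t := by
        simpa using ((hasDerivAt_id t).const_mul ((B - A) / 2)).const_sub B
      have e₁ := (hfab _ ⟨(hx₁ t ht).1, (hx₁ t ht).2.trans hC₂⟩).comp t d₁.exp
      have e₂ := (hfab _ ⟨hC₁.trans (hx₂ t ht).1, (hx₂ t ht).2⟩).comp t d₂.exp
      exact e₁.mul e₂)
    (by fun_prop)
    (fun t ht => by
      refine (abs_add_le _ _).trans ?_
      rw [abs_mul, abs_mul, abs_mul, abs_mul, abs_mul, abs_mul, abs_neg, abs_of_pos hL,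
        abs_of_pos (exp_pos _), abs_of_pos (exp_pos _)]
      have i₁ := mul_le_mul (hb₂ t ht) (hf₂ t ht) (abs_nonneg _) (by positivity)
      have i₂ := mul_le_mul (hf₁ t ht) (hb₁ t ht) (by positivity) hM₁0
      have := mul_le_mul_of_nonneg_left (add_le_add i₁ i₂) hL.le
      refine le_trans (le_of_eq ?_) this
      ring)
  simp only [mul_one] at main
  rw [show A + (B - A) / 2 = (A + B) / 2 by ring, show B - (B - A) / 2 = (A + B) / 2 by ring,
    ← sq] at main
  refine main.trans ?_
  have hsplit : ∫ t in (0:ℝ)..1, t * ((B - A) / 2 * (K₂ * w₂ ^ t * M₂ + M₁ * (K₁ * w₁ ^ t))) =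
      (B - A) / 2 * (K₁ * M₁ * (∫ t in (0:ℝ)..1, t * w₁ ^ t) +
        K₂ * M₂ * ∫ t in (0:ℝ)..1, t * w₂ ^ t) := by
    rw [← intervalIntegral.integral_const_mul, ← intervalIntegral.integral_const_mul,
      ← intervalIntegral.integral_add (Continuous.intervalIntegrable (by fun_prop) _ _)
        (Continuous.intervalIntegrable (by fun_prop) _ _), ← intervalIntegral.integral_const_mul]
    refine intervalIntegral.integral_congr fun t _ => ?_
    ring
  have j₁ := mul_le_mul_of_nonneg_left (integral_id_mul_rpow_le hw₁0 hq)
    (by positivity : 0 ≤ K₁ * M₁)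
  have j₂ := mul_le_mul_of_nonneg_left (integral_id_mul_rpow_le hw₂0 hq)
    (by positivity : 0 ≤ K₂ * M₂)
  have hhalf : ((1:ℝ) / 2) ^ (2 - 1 / q) = 1 / 2 * ((1:ℝ) / 2) ^ (1 - 1 / q) := by
    rw [show (2 - 1 / q : ℝ) = 1 + (1 - 1 / q) by ring, Real.rpow_add (by norm_num), Real.rpow_one]
  rw [hsplit, hhalf]
  refine (mul_le_mul_of_nonneg_left (add_le_add j₁ j₂) hL.le).trans (le_of_eq ?_)
  ring
end

section
/- Let f : I ⊆ (0,∞) → (0,∞) be differentiable on I°, a, b ∈ I° with a < b, f' integrable on [a,b], and let |f'|^q be s-geometrically convex on [a,b] for some q > 1 and s ∈ (0,1]. If |f'(a)| ≤ 1 and |f'(b)| ≤ 1, then |f(a)f(b) − (1/(ln b − ln a)) ∫_a^b (f(x)/x)·f(ab/x) dx| ≤ (ln(b/a)/2)·((q−1)/(2q−1))^{1−1/q}·[ b·|f'(b)|^s·M₁·h₃(θ)^{1/q} + a·|f'(a)|^s·M₂·h₃(ϑ)^{1/q} ]. -/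
/-!
Parametrize `[a, b]` by `X t = a ^ (1 - t) * b ^ t` and put `g t = f (X t)`, so that
`a * b / X t = X (1 - t)` and the integral mean of the statement is `∫₀¹ g t * g (1 - t)`.
Integrating the derivative of `(1 - 2 * t) * g t * g (1 - t)` over `[0, 1 / 2]` expresses the
left-hand side as a difference of two integrals over `[0, 1 / 2]`, one of
`(1 - 2 * t) * g' (1 - t) * g t` and one of `(1 - 2 * t) * g' t * g (1 - t)`
(`symm_identity`). The factors `g t` and `g (1 - t)` are bounded there by `M₁` and `M₂`.

With `A = a * |f' a| ^ s` and `B = b * |f' b| ^ s`, convexity together with `|f' a|, |f' b| ≤ 1`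
and `s * u ≤ u ^ s` on `[0, 1]` gives `X t * |f' (X t)| ≤ A ^ (1 - t) * B ^ t` (`le_of_sgeom`).
What remains is Hölder's inequality for the explicit integral of
`(1 - 2 * t) * A ^ (1 - t) * B ^ t` (`integral_weighted_geom_le`), where the `q`-th power of the
geometric factor integrates to a multiple of `h₃`.

If `f' a` or `f' b` is zero then `f'` vanishes on `(a, b)`, and both sides are zero
(`h₃ 0 = 0` by the conventions for division and `log`). This is absorbed in `abs_integral_le`.
-/

open Real MeasureTheory Set intervalIntegral

noncomputable def h₃ (u : ℝ) : ℝ :=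
  if u = 1 then 1 else (u - 1) / Real.log u

/-- Integrability of a derivative that is bounded on `[0, 1]`: measurability comes from
that of `deriv g`, with which `g'` agrees there. -/
lemma intervalIntegrable_of_bounded_hasDerivAt {g g' : ℝ → ℝ} {C : ℝ}
    (hg : ∀ t ∈ Icc (0:ℝ) 1, HasDerivAt g (g' t) t)
    (hC : ∀ t ∈ Icc (0:ℝ) 1, |g' t| ≤ C) : IntervalIntegrable g' volume 0 1 := by
  rw [intervalIntegrable_iff_integrableOn_Icc_of_le zero_le_one]
  have h1 : IntegrableOn (deriv g) (Icc (0:ℝ) 1) := by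
    refine Measure.integrableOn_of_bounded (M := C) (by simp)
      (measurable_deriv g).aestronglyMeasurable ?_
    filter_upwards [ae_restrict_mem measurableSet_Icc] with t ht
    rw [(hg t ht).deriv]
    exact hC t ht
  exact h1.congr_fun (fun t ht => (hg t ht).deriv) measurableSet_Icc

/-- The integration-by-parts identity. The product `g t * g (1 - t)` is symmetric about
`1 / 2`, so it suffices to integrate the derivative of `(1 - 2 * t) * (g t * g (1 - t))`
over `[0, 1 / 2]`. -/
lemma symm_identity {g g' : ℝ → ℝ}
    (hg : ∀ t ∈ Icc (0:ℝ) 1, HasDerivAt g (g' t) t)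
    (hi : IntervalIntegrable g' volume 0 1) :
    IntervalIntegrable (fun t => (1 - 2 * t) * (g' t * g (1 - t))) volume 0 (1/2) ∧
    IntervalIntegrable (fun t => (1 - 2 * t) * (g' (1 - t) * g t)) volume 0 (1/2) ∧
    g 0 * g 1 - ∫ t in (0:ℝ)..1, g t * g (1 - t) =
      (∫ t in (0:ℝ)..(1/2), (1 - 2 * t) * (g' (1 - t) * g t))
        - ∫ t in (0:ℝ)..(1/2), (1 - 2 * t) * (g' t * g (1 - t)) := by
  have hc : ContinuousOn g (Icc 0 1) := fun t ht => (hg t ht).continuousAt.continuousWithinAt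
  have hc' : ContinuousOn (fun t => g (1 - t)) (Icc 0 1) :=
    hc.comp (by fun_prop) (fun t ht => ⟨by linarith [ht.2], by linarith [ht.1]⟩)
  have hu : uIcc (0:ℝ) 1 = Icc 0 1 := uIcc_of_le zero_le_one
  have hu2 : uIcc (0:ℝ) (1/2) = Icc 0 (1/2) := uIcc_of_le (by norm_num)
  have hsub : uIcc (0:ℝ) (1/2) ⊆ uIcc 0 1 := by
    rw [hu, hu2]; exact Icc_subset_Icc_right (by norm_num)
  have hsub' : uIcc (1/2:ℝ) 1 ⊆ uIcc 0 1 := by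
    rw [hu, uIcc_of_le (by norm_num)]; exact Icc_subset_Icc_left (by norm_num)
  have hi' : IntervalIntegrable (fun t => g' (1 - t)) volume 0 1 := by
    have := (hi.comp_sub_left 1).symm
    simpa using this
  have h1 : IntervalIntegrable (fun t => (1 - 2 * t) * (g' t * g (1 - t))) volume 0 (1/2) :=
    ((hi.mul_continuousOn (by rwa [hu])).continuousOn_mul
      (by fun_prop)).mono_set hsub
  have h2 : IntervalIntegrable (fun t => (1 - 2 * t) * (g' (1 - t) * g t)) volume 0 (1/2) :=
    ((hi'.mul_continuousOn (by rwa [hu])).continuousOn_mul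
      (by fun_prop)).mono_set hsub
  have h3 : IntervalIntegrable (fun t => g t * g (1 - t)) volume 0 1 :=
    ContinuousOn.intervalIntegrable (by rw [hu]; exact hc.mul hc')
  refine ⟨h1, h2, ?_⟩
  have hR : ∀ t ∈ uIcc (0:ℝ) (1/2), HasDerivAt (fun t => (1 - 2 * t) * (g t * g (1 - t)))
      ((1 - 2 * t) * (g' t * g (1 - t)) - (1 - 2 * t) * (g' (1 - t) * g t)
        - 2 * (g t * g (1 - t))) t := by
    intro t ht
    rw [hu2] at ht
    have d1 := hg t ⟨ht.1, by linarith [ht.2]⟩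
    have d2 : HasDerivAt (fun t => g (1 - t)) (g' (1 - t) * (-1)) t :=
      HasDerivAt.comp (h₂ := g) t (hg (1 - t) ⟨by linarith [ht.2], by linarith [ht.1]⟩)
        ((hasDerivAt_id t).const_sub 1)
    have d3 : HasDerivAt (fun t : ℝ => 1 - 2 * t) (-(2 * 1)) t :=
      ((hasDerivAt_id t).const_mul 2).const_sub 1
    refine (d3.mul (d1.mul d2)).congr_deriv ?_
    simp only [Pi.mul_apply]
    ring
  have key := integral_eq_sub_of_hasDerivAt hR
    ((h1.sub h2).sub ((h3.mono_set hsub).const_mul 2))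
  rw [integral_sub (h1.sub h2) ((h3.mono_set hsub).const_mul 2), integral_sub h1 h2,
    intervalIntegral.integral_const_mul] at key
  have hsplit := integral_add_adjacent_intervals (h3.mono_set hsub) (h3.mono_set hsub')
  have hrefl : ∫ t in (1/2:ℝ)..1, g t * g (1 - t) = ∫ t in (0:ℝ)..(1/2), g t * g (1 - t) := by
    have := integral_comp_sub_left (a := (1/2:ℝ)) (b := 1) (fun t => g t * g (1 - t)) 1
    norm_num at this
    norm_num
    rw [← this]
    exact integral_congr fun t _ => mul_comm _ _
  rw [hrefl] at hsplit
  norm_num at key hsplit ⊢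
  linarith

lemma integral_one_sub_two_mul_rpow {p : ℝ} (hp : 0 < p) :
    ∫ t in (0:ℝ)..(1/2), (1 - 2 * t) ^ p = 1 / (2 * (p + 1)) := by
  have := integral_comp_sub_mul (a := (0:ℝ)) (b := 1/2) (fun t : ℝ => t ^ p)
    (two_ne_zero : (2:ℝ) ≠ 0) 1
  rw [this]
  norm_num
  rw [integral_rpow (Or.inl (by linarith))]
  rw [one_rpow, zero_rpow (by linarith)]
  field_simp
  ring

lemma integral_exp_eq_h₃ (c : ℝ) :
    ∫ t in (0:ℝ)..(1/2), Real.exp (2 * c * t) = h₃ (Real.exp c) / 2 := by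
  unfold h₃
  by_cases hc : c = 0
  · subst hc; simp
  · rw [if_neg (by simpa using hc), Real.log_exp,
      integral_comp_mul_left (fun t => Real.exp t) (by simpa using hc), integral_exp]
    simp only [mul_zero, Real.exp_zero, smul_eq_mul]
    rw [show 2 * c * (1/2) = c by ring]
    field_simp

/-- Hölder's inequality with exponents `q / (q - 1)` and `q`, both integrals being evaluated
in closed form. -/
lemma integral_weighted_geom_le {q A B : ℝ} (hq : 1 < q) (hA : 0 < A) (hB : 0 < B) :
    ∫ t in (0:ℝ)..(1/2), (1 - 2 * t) * (A ^ (1 - t) * B ^ t) ≤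
      1 / 2 * ((q - 1) / (2 * q - 1)) ^ (1 - 1 / q)
        * (A * h₃ ((B / A) ^ (q / 2)) ^ (1 / q)) := by
  have hq0 : 0 < q := by linarith
  have hpq : (q / (q - 1)).HolderConjugate q :=
    (Real.HolderConjugate.conjExponent hq).symm
  have hc1 : Continuous fun t : ℝ => 1 - 2 * t := by fun_prop
  have hc2 : Continuous fun t : ℝ => A ^ (1 - t) * B ^ t :=
    (continuous_const.rpow (by fun_prop) (fun _ => Or.inl hA.ne')).mul
      (continuous_const.rpow (by fun_prop) (fun _ => Or.inl hB.ne'))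
  have hmem : ∀ {u : ℝ → ℝ} (_ : Continuous u) (r : ENNReal),
      MemLp u r (volume.restrict (Ioc (0:ℝ) (1/2))) := by
    intro u hu r
    obtain ⟨C, hC⟩ := isCompact_Icc.exists_bound_of_continuousOn
      (s := Icc (0:ℝ) (1/2)) hu.continuousOn
    refine MemLp.of_bound hu.aestronglyMeasurable C ?_
    filter_upwards [ae_restrict_mem measurableSet_Ioc] with t ht
    exact hC t (Ioc_subset_Icc_self ht)
  have hol := MeasureTheory.integral_mul_le_Lp_mul_Lq_of_nonneg
    (μ := volume.restrict (Ioc (0:ℝ) (1/2))) hpq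
    (f := fun t => 1 - 2 * t) (g := fun t => A ^ (1 - t) * B ^ t)
    (by
      filter_upwards [ae_restrict_mem measurableSet_Ioc] with t ht
      simp only [Pi.zero_apply]
      linarith [ht.2])
    (Filter.Eventually.of_forall fun t => by positivity)
    (hmem hc1 _) (hmem hc2 _)
  simp only [← intervalIntegral.integral_of_le (show (0:ℝ) ≤ 1/2 by norm_num)] at hol
  refine hol.trans (le_of_eq ?_)
  have e : (B / A) ^ (q / 2) = Real.exp (q / 2 * Real.log (B / A)) := by
    rw [rpow_def_of_pos (by positivity), mul_comm]
  have hh : 0 ≤ h₃ (Real.exp (q / 2 * Real.log (B / A))) := by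
    have h0 : 0 ≤ ∫ t in (0:ℝ)..(1/2), Real.exp (2 * (q / 2 * Real.log (B / A)) * t) :=
      intervalIntegral.integral_nonneg (by norm_num) fun t _ => (Real.exp_pos _).le
    rw [integral_exp_eq_h₃] at h0
    linarith
  have i2 : ∫ t in (0:ℝ)..(1/2), (A ^ (1 - t) * B ^ t) ^ q
      = A ^ q * (h₃ ((B / A) ^ (q / 2)) / 2) := by
    rw [e, ← integral_exp_eq_h₃, ← intervalIntegral.integral_const_mul]
    refine integral_congr fun t _ => ?_
    simp only [rpow_def_of_pos hA, rpow_def_of_pos hB, Real.log_div hB.ne' hA.ne']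
    rw [← Real.exp_add, ← Real.exp_mul, ← Real.exp_add]
    congr 1
    ring
  have hq1 : 0 < q - 1 := by linarith
  have hq2 : 0 < 2 * q - 1 := by linarith
  rw [i2, integral_one_sub_two_mul_rpow (by positivity)]
  have e1 : 1 / (2 * (q / (q - 1) + 1)) = (1/2) * ((q - 1) / (2 * q - 1)) := by
    field_simp; ring
  have e2 : 1 / (q / (q - 1)) = 1 - 1 / q := by field_simp
  rw [e1, e2, e, mul_rpow (by norm_num) (by positivity), mul_rpow (by positivity) (by positivity),
    ← rpow_mul hA.le, mul_one_div_cancel hq0.ne', rpow_one, div_eq_mul_one_div (h₃ _) 2,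
    mul_rpow hh (by norm_num)]
  have e3 : (1/2:ℝ) ^ (1 - 1 / q) * (1/2:ℝ) ^ (1 / q) = 1/2 := by
    rw [← rpow_add (by norm_num)]; simp
  linear_combination (((q - 1) / (2 * q - 1)) ^ (1 - 1 / q) * (A *
    (h₃ (Real.exp (q / 2 * Real.log (B / A)))) ^ (1 / q))) * e3

/-- The estimate for one half of the identity. If `A` or `B` vanishes, so does the majorant on the
open interval, and the right-hand side is zero: for `B = 0` because `h₃ 0 = 0`. -/
lemma abs_integral_le {q A B K : ℝ} {φ : ℝ → ℝ} (hq : 1 < q) (hA : 0 ≤ A) (hB : 0 ≤ B)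
    (hK : 0 ≤ K)
    (hφ : ∀ t ∈ Ioo (0:ℝ) (1/2), |φ t| ≤ K * ((1 - 2 * t) * (A ^ (1 - t) * B ^ t))) :
    |∫ t in (0:ℝ)..(1/2), φ t| ≤
      K * (1 / 2 * ((q - 1) / (2 * q - 1)) ^ (1 - 1 / q)
        * (A * h₃ ((B / A) ^ (q / 2)) ^ (1 / q))) := by
  have hae : ∀ᵐ t, t ∈ Ioc (0:ℝ) (1/2) →
      ‖φ t‖ ≤ K * ((1 - 2 * t) * (A ^ (1 - t) * B ^ t)) := by
    have : ∀ᵐ t : ℝ, t ≠ 1/2 := by simp [ae_iff]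
    filter_upwards [this] with t h1 h2
    exact hφ t ⟨h2.1, lt_of_le_of_ne h2.2 h1⟩
  by_cases h0 : A = 0 ∨ B = 0
  · have hz : ∀ᵐ t, t ∈ Ioc (0:ℝ) (1/2) → ‖φ t‖ ≤ (0:ℝ) := by
      filter_upwards [hae] with t ht h
      refine (ht h).trans (le_of_eq ?_)
      rcases h0 with h0 | h0
      · rw [h0, zero_rpow (by linarith [h.2])]; ring
      · rw [h0, zero_rpow (by linarith [h.1])]; ring
    have := norm_integral_le_of_norm_le (show (0:ℝ) ≤ 1/2 by norm_num) hz
      (by simp)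
    rw [intervalIntegral.integral_zero, Real.norm_eq_abs] at this
    refine this.trans (le_of_eq ?_)
    rcases h0 with h0 | h0
    · simp [h0]
    · have hh : h₃ 0 = 0 := by simp [h₃]
      rw [h0, zero_div, zero_rpow (by linarith), hh, zero_rpow (by positivity)]
      ring
  · push Not at h0
    have hA' : 0 < A := lt_of_le_of_ne hA (Ne.symm h0.1)
    have hB' : 0 < B := lt_of_le_of_ne hB (Ne.symm h0.2)
    have hc : Continuous fun t : ℝ => K * ((1 - 2 * t) * (A ^ (1 - t) * B ^ t)) :=
      continuous_const.mul ((by fun_prop : Continuous fun t : ℝ => 1 - 2 * t).mul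
        ((continuous_const.rpow (by fun_prop) (fun _ => Or.inl hA'.ne')).mul
          (continuous_const.rpow (by fun_prop) (fun _ => Or.inl hB'.ne'))))
    have := norm_integral_le_of_norm_le (show (0:ℝ) ≤ 1/2 by norm_num) hae
      (hc.intervalIntegrable _ _)
    rw [intervalIntegral.integral_const_mul] at this
    exact this.trans (mul_le_mul_of_nonneg_left (integral_weighted_geom_le hq hA' hB') hK)

/-- For numbers `α, β, z` in `[0, 1]` the exponents `(1 - t) ^ s`, `t ^ s` in the `s`-geometric
bound may be lowered to `s * (1 - t)`, `s * t`. -/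
lemma le_of_sgeom {q s t α β z : ℝ} (hq : 0 < q) (hs : s ∈ Ioc (0:ℝ) 1) (ht : t ∈ Icc (0:ℝ) 1)
    (hα : 0 ≤ α) (hα1 : α ≤ 1) (hβ : 0 ≤ β) (hβ1 : β ≤ 1) (hz : 0 ≤ z)
    (h : z ^ q ≤ (α ^ q) ^ ((1 - t) ^ s) * (β ^ q) ^ (t ^ s)) :
    z ≤ (α ^ s) ^ (1 - t) * (β ^ s) ^ t := by
  have hexp : ∀ u ∈ Icc (0:ℝ) 1, s * u ≤ u ^ s := by
    intro u hu
    have := rpow_le_rpow_of_exponent_ge' hu.1 hu.2 hs.1.le hs.2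
    rw [rpow_one] at this
    nlinarith [hu.1, hs.2]
  have hlow : ∀ γ u : ℝ, 0 ≤ γ → γ ≤ 1 → u ∈ Icc (0:ℝ) 1 →
      (γ ^ q) ^ (u ^ s) ≤ ((γ ^ s) ^ u) ^ q := by
    intro γ u h0 h1 hu
    rw [← rpow_mul h0 s u, ← rpow_mul h0 (s * u) q, mul_comm (s * u) q, rpow_mul h0 q (s * u)]
    exact rpow_le_rpow_of_exponent_ge' (by positivity) (rpow_le_one h0 h1 hq.le)
      (mul_nonneg hs.1.le hu.1) (hexp u hu)
  rw [← rpow_le_rpow_iff hz (by positivity) hq, mul_rpow (by positivity) (by positivity)]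
  refine h.trans ?_
  gcongr
  · exact hlow α (1 - t) hα hα1 ⟨by linarith [ht.2], by linarith [ht.1]⟩
  · exact hlow β t hβ hβ1 ht

theorem stmt_10 (I : Set ℝ) (hI : I ⊆ Set.Ioi (0:ℝ)) (hI' : I.OrdConnected)
    (f f' : ℝ → ℝ) (a b : ℝ) (ha : a ∈ interior I) (hb : b ∈ interior I) (hab : a < b)
    (hf : ∀ x ∈ interior I, HasDerivAt f (f' x) x)
    (hint : IntervalIntegrable f' volume a b)
    (hpos : ∀ x ∈ I, 0 < f x)
    (q s : ℝ) (hq : 1 < q) (hs : s ∈ Set.Ioc (0:ℝ) 1)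
    (hconv : ∀ x ∈ Set.Icc a b, ∀ y ∈ Set.Icc a b, ∀ l ∈ Set.Icc (0:ℝ) 1,
      |f' (x ^ l * y ^ (1 - l))| ^ q ≤ (|f' x| ^ q) ^ (l ^ s) * (|f' y| ^ q) ^ ((1 - l) ^ s))
    (M₁ M₂ : ℝ)
    (hM₁ : IsGreatest ((fun x => |f x|) '' Set.Icc a (Real.sqrt (a*b))) M₁)
    (hM₂ : IsGreatest ((fun x => |f x|) '' Set.Icc (Real.sqrt (a*b)) b) M₂)
    (hfa : |f' a| ≤ 1) (hfb : |f' b| ≤ 1) :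
    |f a * f b - (1 / (Real.log b - Real.log a)) * ∫ x in a..b, (f x / x) * f (a * b / x)|
      ≤ (Real.log (b / a) / 2) * ((q - 1) / (2 * q - 1)) ^ (1 - 1 / q) *
        (b * |f' b| ^ s * M₁ * (h₃ ((a * |f' a| ^ s / (b * |f' b| ^ s)) ^ (q / 2))) ^ (1 / q)
          + a * |f' a| ^ s * M₂ * (h₃ ((b * |f' b| ^ s / (a * |f' a| ^ s)) ^ (q / 2))) ^ (1 / q)) := by
  have hIcc : Icc a b ⊆ interior I := hI'.interior.out ha hb
  have ha0 : 0 < a := hI (interior_subset ha)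
  have hb0 : 0 < b := hI (interior_subset hb)
  have hq0 : 0 < q := by linarith
  have hlog : Real.log a < Real.log b := Real.log_lt_log ha0 hab
  set L := Real.log b - Real.log a with hL
  have hLdiv : Real.log (b / a) = L := Real.log_div hb0.ne' ha0.ne'
  have hL0 : 0 < L := by rw [hL]; linarith
  -- the logarithmic parametrization `X t = a ^ (1 - t) * b ^ t` of `[a, b]`
  set X : ℝ → ℝ := fun t => Real.exp (Real.log a + L * t) with hX
  have hX0 : X 0 = a := by simp [hX, Real.exp_log ha0]
  have hX1 : X 1 = b := by simp [hX, hL, Real.exp_log hb0]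
  have hXmono : Monotone X := fun t u htu => by simp only [hX]; gcongr
  have hXpos : ∀ t, 0 < X t := fun t => Real.exp_pos _
  have hXmul : ∀ t, X t = a ^ (1 - t) * b ^ t := by
    intro t
    rw [rpow_def_of_pos ha0, rpow_def_of_pos hb0, ← Real.exp_add]
    simp only [hX, hL]; congr 1; ring
  have hXrefl : ∀ t, a * b / X t = X (1 - t) := by
    intro t
    rw [div_eq_iff (hXpos t).ne', ← hX0, ← hX1]
    simp only [hX, ← Real.exp_add]; congr 1; ring
  have hXhalf : X (1/2) = Real.sqrt (a * b) := by
    rw [eq_comm, Real.sqrt_eq_iff_mul_self_eq (by positivity) (hXpos _).le, ← hX0, ← hX1]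
    simp only [hX, ← Real.exp_add]; congr 1; ring
  have hXI : ∀ t ∈ Icc (0:ℝ) 1, X t ∈ Icc a b := fun t ht =>
    ⟨hX0 ▸ hXmono ht.1, hX1 ▸ hXmono ht.2⟩
  have hXd : ∀ t, HasDerivAt X (L * X t) t := by
    intro t
    have h := (((hasDerivAt_id t).const_mul L).const_add (Real.log a)).exp
    exact h.congr_deriv (by simp [hX]; ring)
  set A := a * |f' a| ^ s with hA
  set B := b * |f' b| ^ s with hB
  have hA0 : 0 ≤ A := by positivity
  have hB0 : 0 ≤ B := by positivity
  have hpt : ∀ t ∈ Icc (0:ℝ) 1, |f' (X t)| ≤ (|f' a| ^ s) ^ (1 - t) * (|f' b| ^ s) ^ t := by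
    intro t ht
    refine le_of_sgeom hq0 hs ht (abs_nonneg _) hfa (abs_nonneg _) hfb (abs_nonneg _) ?_
    have := hconv a ⟨le_rfl, hab.le⟩ b ⟨hab.le, le_rfl⟩ (1 - t)
      ⟨by linarith [ht.2], by linarith [ht.1]⟩
    rwa [sub_sub_cancel, ← hXmul] at this
  have hbd : ∀ t ∈ Icc (0:ℝ) 1, |L * X t * f' (X t)| ≤ L * (A ^ (1 - t) * B ^ t) := by
    intro t ht
    rw [abs_mul, abs_of_pos (mul_pos hL0 (hXpos t)), mul_assoc, hA, hB,
      mul_rpow ha0.le (by positivity), mul_rpow hb0.le (by positivity)]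
    refine mul_le_mul_of_nonneg_left ?_ hL0.le
    calc X t * |f' (X t)| ≤ X t * ((|f' a| ^ s) ^ (1 - t) * (|f' b| ^ s) ^ t) :=
          mul_le_mul_of_nonneg_left (hpt t ht) (hXpos t).le
      _ = _ := by rw [hXmul]; ring
  have hbC : ∀ t ∈ Icc (0:ℝ) 1, |L * X t * f' (X t)| ≤ L * b := by
    intro t ht
    rw [abs_mul, abs_of_pos (mul_pos hL0 (hXpos t)), mul_assoc]
    refine mul_le_mul_of_nonneg_left ?_ hL0.le
    have h1 : |f' (X t)| ≤ 1 := (hpt t ht).trans <| mul_le_one₀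
      (rpow_le_one (by positivity) (rpow_le_one (abs_nonneg _) hfa hs.1.le) (by linarith [ht.2]))
      (by positivity)
      (rpow_le_one (by positivity) (rpow_le_one (abs_nonneg _) hfb hs.1.le) ht.1)
    exact (mul_le_of_le_one_right (hXpos t).le h1).trans (hXI t ht).2
  have hgd : ∀ t ∈ Icc (0:ℝ) 1, HasDerivAt (fun t => f (X t)) (L * X t * f' (X t)) t := by
    intro t ht
    exact ((hf (X t) (hIcc (hXI t ht))).comp t (hXd t)).congr_deriv (mul_comm _ _)
  obtain ⟨-, -, hid⟩ := symm_identity hgd (intervalIntegrable_of_bounded_hasDerivAt hgd hbC)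
  have hfc : ContinuousOn f (Icc a b) := fun x hx =>
    (hf x (hIcc hx)).continuousAt.continuousWithinAt
  -- the substitution `x = X t`
  have hsub : ∫ x in a..b, (f x / x) * f (a * b / x)
      = L * ∫ t in (0:ℝ)..1, f (X t) * f (X (1 - t)) := by
    have himg : X '' uIcc 0 1 ⊆ Icc a b := by
      rw [uIcc_of_le zero_le_one]; rintro _ ⟨t, ht, rfl⟩; exact hXI t ht
    have hcx : ContinuousOn (fun x => (f x / x) * f (a * b / x)) (Icc a b) := by
      have hne : ∀ x ∈ Icc a b, x ≠ 0 := fun x hx => (ha0.trans_le hx.1).ne'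
      refine (hfc.div continuousOn_id hne).mul
        (hfc.comp (continuousOn_const.div continuousOn_id hne) ?_)
      intro x hx
      have hx0 : 0 < x := ha0.trans_le hx.1
      constructor
      · rw [le_div_iff₀ hx0]; exact mul_le_mul_of_nonneg_left hx.2 ha0.le
      · rw [div_le_iff₀ hx0, mul_comm]; exact mul_le_mul_of_nonneg_left hx.1 hb0.le
    have hXc : Continuous X := by simp only [hX]; fun_prop
    have := integral_comp_mul_deriv'' (a := (0:ℝ)) (b := 1) (f := X) (f' := fun t => L * X t)
      (g := fun x => (f x / x) * f (a * b / x)) hXc.continuousOn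
      (fun t _ => (hXd t).hasDerivWithinAt) (by fun_prop) (hcx.mono himg)
    rw [hX0, hX1] at this
    rw [← this, ← intervalIntegral.integral_const_mul]
    refine integral_congr fun t _ => ?_
    simp only [Function.comp, hXrefl]
    field_simp [(hXpos t).ne']
  have hM1 : ∀ t ∈ Icc (0:ℝ) (1/2), |f (X t)| ≤ M₁ := fun t ht =>
    hM₁.2 ⟨X t, ⟨hX0 ▸ hXmono ht.1, hXhalf ▸ hXmono ht.2⟩, rfl⟩
  have hM2 : ∀ t ∈ Icc (0:ℝ) (1/2), |f (X (1 - t))| ≤ M₂ := fun t ht =>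
    hM₂.2 ⟨X (1 - t), ⟨hXhalf ▸ hXmono (by linarith [ht.2]),
      hX1 ▸ hXmono (by linarith [ht.1])⟩, rfl⟩
  have hM10 : 0 ≤ M₁ := (abs_nonneg _).trans (hM1 0 (by norm_num))
  have hM20 : 0 ≤ M₂ := (abs_nonneg _).trans (hM2 0 (by norm_num))
  have b1 := abs_integral_le (K := L * M₁) (A := B) (B := A)
    (φ := fun t => (1 - 2 * t) * (L * X (1 - t) * f' (X (1 - t)) * f (X t)))
    hq hB0 hA0 (by positivity) (by
      intro t ht
      have h1 := hbd (1 - t) ⟨by linarith [ht.2], by linarith [ht.1]⟩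
      rw [sub_sub_cancel] at h1
      have h2 := mul_le_mul h1 (hM1 t ⟨ht.1.le, ht.2.le⟩) (abs_nonneg _) (by positivity)
      have h3 : 0 ≤ 1 - 2 * t := by linarith [ht.2]
      rw [abs_mul, abs_of_nonneg h3, abs_mul]
      exact (mul_le_mul_of_nonneg_left h2 h3).trans (le_of_eq (by ring)))
  have b2 := abs_integral_le (K := L * M₂) (A := A) (B := B)
    (φ := fun t => (1 - 2 * t) * (L * X t * f' (X t) * f (X (1 - t))))
    hq hA0 hB0 (by positivity) (by
      intro t ht
      have h1 := hbd t ⟨ht.1.le, by linarith [ht.2]⟩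
      have h2 := mul_le_mul h1 (hM2 t ⟨ht.1.le, ht.2.le⟩) (abs_nonneg _) (by positivity)
      have h3 : 0 ≤ 1 - 2 * t := by linarith [ht.2]
      rw [abs_mul, abs_of_nonneg h3, abs_mul]
      exact (mul_le_mul_of_nonneg_left h2 h3).trans (le_of_eq (by ring)))
  have hred : f a * f b - (1 / L) * ∫ x in a..b, (f x / x) * f (a * b / x)
      = f (X 0) * f (X 1) - ∫ t in (0:ℝ)..1, f (X t) * f (X (1 - t)) := by
    rw [hsub, hX0, hX1, ← mul_assoc, one_div_mul_cancel hL0.ne', one_mul]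
  rw [hred, hid, hLdiv]
  refine (abs_sub _ _).trans ((add_le_add b1 b2).trans (le_of_eq ?_))
  ring
end

section
/- Let f : I ⊆ (0,∞) → (0,∞) be differentiable on I°, a, b ∈ I° with a < b, f' integrable on [a,b], and let |f'|^q be s-geometrically convex on [a,b] for some q > 1 and s ∈ (0,1]. If |f'(a)| ≥ 1 and |f'(b)| ≥ 1, then |f(a)f(b) − (1/(ln b − ln a)) ∫_a^b (f(x)/x)·f(ab/x) dx| ≤ (ln(b/a)/2)·((q−1)/(2q−1))^{1−1/q}·[ b·|f'(b)|·|f'(a)|^{1−s}·M₁·h₃(θ)^{1/q} + a·|f'(a)|·|f'(b)|^{1−s}·M₂·h₃(ϑ)^{1/q} ]. -/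
/-!
Parametrise `[a, b]` geometrically by `X t = a ^ (1 - t) * b ^ t` and put `F = f ∘ X`, so that
`a * b / X t = X (1 - t)` and the integral in question is the mean of `F t * F (1 - t)` over
`[0, 1]`. This product is symmetric about `1/2`, and the derivative of
`(2 * t - 1) * F t * F (1 - t)` on `[0, 1/2]` shows that `F 0 * F 1` minus the mean is at most
`∫ (1 - 2 * t) * (|F' t| * |F (1 - t)| + |F' (1 - t)| * |F t|)` over `[0, 1/2]`
(`abs_mul_sub_integral_le`).

On `[0, 1/2]` one has `|F t| ≤ M₁` and `|F (1 - t)| ≤ M₂`. The `s`-geometric convexity, together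
with `t ^ s ≤ s * t + (1 - s)` and `1 ≤ |f' a|, |f' b|`, bounds `|F' t|` by a constant times `R ^ t`,
where `R = b * |f' b| ^ s / (a * |f' a| ^ s)`, and `|F' (1 - t)|` by a constant times `(1 / R) ^ t`
(`mul_le_of_geometric`). Hölder's inequality for `∫ (1 - 2 * t) * R ^ t` then produces the
constant `((q - 1) / (2 * q - 1)) ^ (1 - 1 / q)` and the values of `h₃` (`holder_half`).
-/

open Real MeasureTheory Set intervalIntegral

/-- The concave function `t ↦ t ^ s` lies below its tangent line at `1` (Bernoulli). -/
lemma rpow_le_affine {s t : ℝ} (hs : s ∈ Ioc (0:ℝ) 1) (ht : 0 ≤ t) :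
    t ^ s ≤ s * t + (1 - s) := by
  have h := rpow_one_add_le_one_add_mul_self (s := t - 1) (by linarith) hs.1.le hs.2
  rw [show 1 + (t - 1) = t by ring] at h
  linarith

/-- The `s`-geometric convexity bound turned into an exponential one: since `A, B ≥ 1`, the exponents
`(1 - t) ^ s` and `t ^ s` may be replaced by their affine majorants. In the application
`A = |f' a|`, `B = |f' b|` and `V` is `|f'|` at `a ^ (1 - t) * b ^ t`. -/
lemma mul_le_of_geometric {a b A B V q s t : ℝ} (ha : 0 < a) (hb : 0 < b) (hA : 1 ≤ A)
    (hB : 1 ≤ B) (hV : 0 ≤ V) (hq : 0 < q) (hs : s ∈ Ioc (0:ℝ) 1) (ht : t ∈ Icc (0:ℝ) 1)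
    (h : V ^ q ≤ (A ^ q) ^ ((1 - t) ^ s) * (B ^ q) ^ (t ^ s)) :
    a ^ (1 - t) * b ^ t * V ≤ a * A * B ^ (1 - s) * (b * B ^ s / (a * A ^ s)) ^ t := by
  have hA0 : 0 < A := by linarith
  have hB0 : 0 < B := by linarith
  have h1 : (A ^ q) ^ ((1 - t) ^ s) * (B ^ q) ^ (t ^ s)
      = (A ^ ((1 - t) ^ s) * B ^ (t ^ s)) ^ q := by
    rw [mul_rpow (by positivity) (by positivity), ← rpow_mul hA0.le, ← rpow_mul hA0.le,
      ← rpow_mul hB0.le, ← rpow_mul hB0.le, mul_comm q, mul_comm q]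
  rw [h1, rpow_le_rpow_iff hV (by positivity) hq] at h
  have h2 : A ^ ((1 - t) ^ s) ≤ A ^ (s * (1 - t) + (1 - s)) :=
    rpow_le_rpow_of_exponent_le hA (rpow_le_affine hs (by linarith [ht.2]))
  have h3 : B ^ (t ^ s) ≤ B ^ (s * t + (1 - s)) :=
    rpow_le_rpow_of_exponent_le hB (rpow_le_affine hs ht.1)
  calc a ^ (1 - t) * b ^ t * V
      ≤ a ^ (1 - t) * b ^ t * (A ^ (s * (1 - t) + (1 - s)) * B ^ (s * t + (1 - s))) := by
        gcongr
        exact h.trans (by gcongr)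
    _ = a * A * B ^ (1 - s) * (b * B ^ s / (a * A ^ s)) ^ t := by
        obtain ⟨x, rfl⟩ : ∃ x, a = exp x := ⟨_, (exp_log ha).symm⟩
        obtain ⟨y, rfl⟩ : ∃ x, b = exp x := ⟨_, (exp_log hb).symm⟩
        obtain ⟨z, rfl⟩ : ∃ x, A = exp x := ⟨_, (exp_log hA0).symm⟩
        obtain ⟨w, rfl⟩ : ∃ x, B = exp x := ⟨_, (exp_log hB0).symm⟩
        simp only [← exp_mul, ← exp_add, ← exp_sub]
        congr 1
        ring

lemma integral_rpow_half {R q : ℝ} (hR : 0 < R) (hq : 0 < q) :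
    ∫ t in (0:ℝ)..(1/2), (R ^ t) ^ q = 1 / 2 * h₃ (R ^ (q / 2)) := by
  have h : ∀ t : ℝ, (R ^ t) ^ q = exp (log R * q * t) := fun t => by
    rw [← rpow_mul hR.le, rpow_def_of_pos hR]; congr 1; ring
  simp only [h]
  by_cases h1 : R = 1
  · subst h1; simp [h₃]
  · have hl : log R ≠ 0 := log_ne_zero_of_pos_of_ne_one hR h1
    have h2 : R ^ (q / 2) ≠ 1 := by
      intro h'
      have := log_rpow hR (q / 2)
      rw [h', log_one, eq_comm, mul_eq_zero] at this
      exact this.elim (by positivity) hl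
    rw [h₃, if_neg h2, log_rpow hR, integral_comp_mul_left (fun x => exp x) (by positivity),
      integral_exp, rpow_def_of_pos hR, smul_eq_mul]
    rw [show log R * q * (1 / 2) = log R * (q / 2) by ring]
    simp only [mul_zero, exp_zero]
    field_simp

lemma integral_linear_rpow {p : ℝ} (hp : 0 < p) :
    ∫ t in (0:ℝ)..(1/2), (1 - 2 * t) ^ p = 1 / 2 * (1 / (p + 1)) := by
  rw [integral_comp_sub_mul (fun x => x ^ p) (by norm_num : (2:ℝ) ≠ 0),
    integral_rpow (Or.inl (by linarith))]
  rw [show (1:ℝ) - 2 * (1 / 2) = 0 by norm_num, zero_rpow (by linarith)]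
  simp

lemma memLp_Ioc_of_continuous {g : ℝ → ℝ} (hg : Continuous g) {u v : ℝ} {p : ENNReal} :
    MemLp g p (volume.restrict (Ioc u v)) := by
  obtain ⟨C, hC⟩ := isCompact_Icc.exists_bound_of_continuousOn (s := Icc u v) hg.continuousOn
  refine MemLp.of_bound hg.aestronglyMeasurable C ?_
  filter_upwards [ae_restrict_mem measurableSet_Ioc] with t ht
  exact hC t (Ioc_subset_Icc_self ht)

/-- Hölder's inequality with exponents `q / (q - 1)` and `q`, applied to `1 - 2 * t` and `R ^ t` on
`[0, 1/2]`. -/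
lemma holder_half {R q : ℝ} (hR : 0 < R) (hq : 1 < q) :
    ∫ t in (0:ℝ)..(1/2), (1 - 2 * t) * R ^ t
      ≤ 1 / 2 * ((q - 1) / (2 * q - 1)) ^ (1 - 1 / q) * h₃ (R ^ (q / 2)) ^ (1 / q) := by
  have hpq : (q / (q - 1)).HolderConjugate q := (Real.HolderConjugate.conjExponent hq).symm
  set p := q / (q - 1) with hp
  have hq1 : 0 < q - 1 := by linarith
  have hp0 : 0 < p := by positivity
  have hRc : Continuous fun t : ℝ => R ^ t := continuous_const_rpow hR.ne'
  have key := integral_mul_le_Lp_mul_Lq_of_nonneg (μ := volume.restrict (Ioc (0:ℝ) (1/2)))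
    (f := fun t => 1 - 2 * t) (g := fun t => R ^ t) hpq
    (by filter_upwards [ae_restrict_mem measurableSet_Ioc] with t ht
        have := ht.2; simp only [Pi.zero_apply]; linarith)
    (by filter_upwards with t; positivity)
    (memLp_Ioc_of_continuous (by fun_prop)) (memLp_Ioc_of_continuous hRc)
  simp only [← intervalIntegral.integral_of_le (show (0:ℝ) ≤ 1/2 by norm_num)] at key
  rw [integral_rpow_half hR (by linarith), integral_linear_rpow hp0] at key
  have hh : 0 ≤ h₃ (R ^ (q / 2)) := by
    have : 0 ≤ ∫ t in (0:ℝ)..(1/2), (R ^ t) ^ q :=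
      intervalIntegral.integral_nonneg (by norm_num) (fun t _ => by positivity)
    rw [integral_rpow_half hR (by linarith)] at this
    linarith
  refine key.trans_eq ?_
  have e1 : 1 / p = 1 - 1 / q := by rw [hp]; field_simp
  have e2 : 1 / (p + 1) = (q - 1) / (2 * q - 1) := by
    rw [hp, show q / (q - 1) + 1 = (2 * q - 1) / (q - 1) by field_simp; ring, one_div_div]
  rw [e1, e2, mul_rpow (by norm_num) (div_nonneg hq1.le (by linarith)),
    mul_rpow (by norm_num) hh]
  have e3 : (1 / 2 : ℝ) ^ (1 - 1 / q) * (1 / 2) ^ (1 / q) = 1 / 2 := by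
    rw [← rpow_add (by norm_num)]; simp
  linear_combination ((q - 1) / (2 * q - 1)) ^ (1 - 1 / q) * h₃ (R ^ (q / 2)) ^ (1 / q) * e3

/-- Integration by parts against the weight `2 * t - 1`, as an inequality. The majorants `N₁, N₂` are
continuous, so no integrability of `F'` is needed: the one-sided forms of the fundamental theorem of
calculus compare the increment of `(2 * t - 1) * F t * F (1 - t)` with the integral of a
majorant or minorant of its derivative. -/
lemma abs_mul_sub_integral_le {F F' N₁ N₂ : ℝ → ℝ} (hN₁ : Continuous N₁) (hN₂ : Continuous N₂)
    (hF : ∀ t ∈ Icc (0:ℝ) 1, HasDerivAt F (F' t) t)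
    (h₁ : ∀ t ∈ Icc (0:ℝ) (1/2), |F' t * F (1 - t)| ≤ N₁ t)
    (h₂ : ∀ t ∈ Icc (0:ℝ) (1/2), |F' (1 - t) * F t| ≤ N₂ t) :
    |F 0 * F 1 - ∫ t in (0:ℝ)..1, F t * F (1 - t)|
      ≤ (∫ t in (0:ℝ)..(1/2), (1 - 2 * t) * N₁ t)
        + ∫ t in (0:ℝ)..(1/2), (1 - 2 * t) * N₂ t := by
  have hm : MapsTo (fun t : ℝ => 1 - t) (Icc 0 1) (Icc 0 1) :=
    fun t ht => ⟨by linarith [ht.2], by linarith [ht.1]⟩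
  have hFc : ContinuousOn F (Icc 0 1) := fun t ht => (hF t ht).continuousAt.continuousWithinAt
  have hPc : ContinuousOn (fun t => F t * F (1 - t)) (Icc 0 1) :=
    hFc.mul (hFc.comp (by fun_prop) hm)
  have hsub : Icc (0:ℝ) (1/2) ⊆ Icc 0 1 := Icc_subset_Icc_right (by norm_num)
  have hsub' : Icc (1/2:ℝ) 1 ⊆ Icc 0 1 := Icc_subset_Icc_left (by norm_num)
  have hPi : IntervalIntegrable (fun t => F t * F (1 - t)) volume 0 (1/2) :=
    (hPc.mono hsub).intervalIntegrable_of_Icc (by norm_num)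
  have hPi' : IntervalIntegrable (fun t => F t * F (1 - t)) volume (1/2) 1 :=
    (hPc.mono hsub').intervalIntegrable_of_Icc (by norm_num)
  -- the integrand is invariant under `t ↦ 1 - t`
  have hsymm : ∫ t in (0:ℝ)..1, F t * F (1 - t)
      = ∫ t in (0:ℝ)..(1/2), 2 * (F t * F (1 - t)) := by
    rw [← integral_add_adjacent_intervals hPi hPi']
    have := integral_comp_sub_left (a := 0) (b := 1/2) (fun t => F t * F (1 - t)) (1:ℝ)
    rw [show (1:ℝ) - 1/2 = 1/2 by norm_num, sub_zero] at this
    rw [← this, intervalIntegral.integral_const_mul, two_mul]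
    congr 1
    refine intervalIntegral.integral_congr fun t _ => ?_
    simp only [sub_sub_cancel]; ring
  set B : ℝ → ℝ := fun t => (1 - 2 * t) * N₁ t + (1 - 2 * t) * N₂ t with hB
  have hBc : Continuous B := by fun_prop
  have hBi : ∫ t in (0:ℝ)..(1/2), B t = (∫ t in (0:ℝ)..(1/2), (1 - 2 * t) * N₁ t)
        + ∫ t in (0:ℝ)..(1/2), (1 - 2 * t) * N₂ t :=
    intervalIntegral.integral_add (Continuous.intervalIntegrable (by fun_prop) _ _)
      (Continuous.intervalIntegrable (by fun_prop) _ _)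
  have hd : ∀ t ∈ Icc (0:ℝ) 1, HasDerivAt (fun t => (2 * t - 1) * (F t * F (1 - t)))
      (2 * (F t * F (1 - t))
        + (2 * t - 1) * (F' t * F (1 - t) - F' (1 - t) * F t)) t := fun t ht => by
    have e1 : HasDerivAt (fun t : ℝ => 2 * t - 1) 2 t := by
      simpa using ((hasDerivAt_id t).const_mul 2).sub_const 1
    have e2 : HasDerivAt (fun t : ℝ => F (1 - t)) (-F' (1 - t)) t := by
      simpa using (hF _ (hm ht)).comp_const_sub 1 t
    exact (e1.fun_mul ((hF t ht).fun_mul e2)).congr_deriv (by ring)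
  have hb : ∀ t ∈ Icc (0:ℝ) (1/2),
      |(2 * t - 1) * (F' t * F (1 - t) - F' (1 - t) * F t)| ≤ B t := fun t ht => by
    have h0 : 0 ≤ 1 - 2 * t := by linarith [ht.2]
    rw [abs_mul, abs_sub_comm, abs_of_nonneg h0, hB]
    simp only
    rw [← mul_add]
    gcongr
    exact (abs_sub _ _).trans (add_le_add (h₁ t ht) (h₂ t ht))
  have hGc : ContinuousOn (fun t => (2 * t - 1) * (F t * F (1 - t))) (Icc 0 (1/2)) :=
    fun t ht => (hd t (hsub ht)).continuousAt.continuousWithinAt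
  have hPi2 := hPi.const_mul 2
  have hBi' : IntervalIntegrable B volume 0 (1/2) := hBc.intervalIntegrable _ _
  have up := sub_le_integral_of_hasDeriv_right_of_le (φ := fun t => 2 * (F t * F (1 - t)) + B t)
    (by norm_num) hGc
    (fun t ht => (hd t (hsub (Ioo_subset_Icc_self ht))).hasDerivWithinAt)
    (((continuousOn_const.mul (hPc.mono hsub)).add hBc.continuousOn).integrableOn_Icc)
    (fun t ht => add_le_add_right (abs_le.1 (hb t (Ioo_subset_Icc_self ht))).2 _)
  have lo := integral_le_sub_of_hasDeriv_right_of_le (φ := fun t => 2 * (F t * F (1 - t)) - B t)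
    (by norm_num) hGc
    (fun t ht => (hd t (hsub (Ioo_subset_Icc_self ht))).hasDerivWithinAt)
    (((continuousOn_const.mul (hPc.mono hsub)).sub hBc.continuousOn).integrableOn_Icc)
    (fun t ht => (sub_eq_add_neg _ _).trans_le
      (add_le_add_right (abs_le.1 (hb t (Ioo_subset_Icc_self ht))).1 _))
  rw [intervalIntegral.integral_add hPi2 hBi'] at up
  rw [intervalIntegral.integral_sub hPi2 hBi'] at lo
  norm_num at up lo
  rw [hsymm, ← hBi, abs_le]
  norm_num
  constructor <;> linarith

theorem stmt_11 (I : Set ℝ) (hI : I ⊆ Set.Ioi (0:ℝ)) (hI' : I.OrdConnected)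
    (f f' : ℝ → ℝ) (a b : ℝ) (ha : a ∈ interior I) (hb : b ∈ interior I) (hab : a < b)
    (hf : ∀ x ∈ interior I, HasDerivAt f (f' x) x)
    (hint : IntervalIntegrable f' volume a b)
    (hpos : ∀ x ∈ I, 0 < f x)
    (q s : ℝ) (hq : 1 < q) (hs : s ∈ Set.Ioc (0:ℝ) 1)
    (hconv : ∀ x ∈ Set.Icc a b, ∀ y ∈ Set.Icc a b, ∀ l ∈ Set.Icc (0:ℝ) 1,
      |f' (x ^ l * y ^ (1 - l))| ^ q ≤ (|f' x| ^ q) ^ (l ^ s) * (|f' y| ^ q) ^ ((1 - l) ^ s))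
    (M₁ M₂ : ℝ)
    (hM₁ : IsGreatest ((fun x => |f x|) '' Set.Icc a (Real.sqrt (a*b))) M₁)
    (hM₂ : IsGreatest ((fun x => |f x|) '' Set.Icc (Real.sqrt (a*b)) b) M₂)
    (hfa : 1 ≤ |f' a|) (hfb : 1 ≤ |f' b|) :
    |f a * f b - (1 / (Real.log b - Real.log a)) * ∫ x in a..b, (f x / x) * f (a * b / x)|
      ≤ (Real.log (b / a) / 2) * ((q - 1) / (2 * q - 1)) ^ (1 - 1 / q) *
        (b * |f' b| * |f' a| ^ (1 - s) * M₁ * (h₃ ((a * |f' a| ^ s / (b * |f' b| ^ s)) ^ (q / 2))) ^ (1 / q)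
          + a * |f' a| * |f' b| ^ (1 - s) * M₂ * (h₃ ((b * |f' b| ^ s / (a * |f' a| ^ s)) ^ (q / 2))) ^ (1 / q)) := by
  have ha0 : 0 < a := hI (interior_subset ha)
  have hb0 : 0 < b := hI (interior_subset hb)
  have hA0 : 0 < |f' a| := by linarith
  have hB0 : 0 < |f' b| := by linarith
  have hmem : Icc a b ⊆ interior I := hI'.interior.out ha hb
  have haI : a ∈ Icc a b := ⟨le_rfl, hab.le⟩
  have hbI : b ∈ Icc a b := ⟨hab.le, le_rfl⟩
  have hL : 0 < log b - log a := sub_pos.2 (log_lt_log ha0 hab)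
  rw [log_div hb0.ne' ha0.ne']
  set L := log b - log a with hLdef
  -- the geometric parametrisation of `[a, b]`
  set X : ℝ → ℝ := fun t => exp (log a + t * L) with hX
  have hXd : ∀ t, HasDerivAt X (X t * L) t := fun t => by
    simpa using (((hasDerivAt_id t).mul_const L).const_add (log a)).exp
  have hXc : Continuous X := by fun_prop
  have hX0 : X 0 = a := by simp [hX, exp_log ha0]
  have hX1 : X 1 = b := by simp [hX, hLdef, exp_log hb0]
  have hXpos : ∀ t, 0 < X t := fun t => exp_pos _
  have hXr : ∀ t, X t = a ^ (1 - t) * b ^ t := fun t => by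
    rw [rpow_def_of_pos ha0, rpow_def_of_pos hb0, ← exp_add]
    simp only [hX, hLdef]; congr 1; ring
  have hXr' : ∀ t, X (1 - t) = b ^ (1 - t) * a ^ t := fun t => by
    rw [hXr, sub_sub_cancel, mul_comm]
  have hXmono : Monotone X := fun t u htu => exp_le_exp.2 (by gcongr)
  have hXmem : ∀ t ∈ Icc (0:ℝ) 1, X t ∈ Icc a b := fun t ht =>
    ⟨hX0 ▸ hXmono ht.1, hX1 ▸ hXmono ht.2⟩
  have hXrefl : ∀ t, a * b / X t = X (1 - t) := fun t => by
    rw [div_eq_iff (hXpos t).ne', ← hX0, ← hX1]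
    simp only [hX, ← exp_add]; congr 1; ring
  have hXhalf : X (1/2) = sqrt (a * b) := by
    rw [eq_comm, sqrt_eq_iff_mul_self_eq (by positivity) (hXpos _).le, ← hX0, ← hX1]
    simp only [hX, ← exp_add]; congr 1; ring
  set F : ℝ → ℝ := fun t => f (X t) with hFdef
  have hFd : ∀ t ∈ Icc (0:ℝ) 1, HasDerivAt F (f' (X t) * (X t * L)) t := fun t ht =>
    (hf _ (hmem (hXmem t ht))).comp t (hXd t)
  -- substitute `x = X t`
  have hfc : ContinuousOn f (Icc a b) := fun x hx =>
    (hf x (hmem hx)).continuousAt.continuousWithinAt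
  have hsubst : ∫ x in a..b, (f x / x) * f (a * b / x)
      = L * ∫ t in (0:ℝ)..1, F t * F (1 - t) := by
    have himg : X '' uIcc 0 1 ⊆ Icc a b := by
      rw [uIcc_of_le zero_le_one]; rintro _ ⟨t, ht, rfl⟩; exact hXmem t ht
    have hgc : ContinuousOn (fun x => (f x / x) * f (a * b / x)) (Icc a b) := by
      have hne : ∀ x ∈ Icc a b, x ≠ 0 := fun x hx => (ha0.trans_le hx.1).ne'
      refine (hfc.div continuousOn_id hne).mul (hfc.comp (continuousOn_const.div continuousOn_id hne) ?_)
      intro x hx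
      have hx0 : 0 < x := ha0.trans_le hx.1
      exact ⟨by rw [le_div_iff₀ hx0]; nlinarith [hx.2], by rw [div_le_iff₀ hx0]; nlinarith [hx.1]⟩
    have := integral_comp_mul_deriv'' (a := 0) (b := 1) (f := X) (f' := fun t => X t * L)
      (g := fun x => (f x / x) * f (a * b / x)) hXc.continuousOn
      (fun t _ => (hXd t).hasDerivWithinAt) (by fun_prop) (hgc.mono himg)
    rw [hX0, hX1] at this
    rw [← this, ← intervalIntegral.integral_const_mul]
    refine intervalIntegral.integral_congr fun t _ => ?_
    have := (hXpos t).ne'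
    simp only [Function.comp, hXrefl, hFdef]
    field_simp
  set R := b * |f' b| ^ s / (a * |f' a| ^ s) with hR
  set Q := a * |f' a| ^ s / (b * |f' b| ^ s) with hQ
  have hR0 : 0 < R := by positivity
  have hQ0 : 0 < Q := by positivity
  set K₂ := L * (a * |f' a| * |f' b| ^ (1 - s)) * M₂ with hK₂
  set K₁ := L * (b * |f' b| * |f' a| ^ (1 - s)) * M₁ with hK₁
  have hM₁0 : 0 ≤ M₁ := by obtain ⟨x, -, h⟩ := hM₁.1; rw [← h]; positivity
  have hM₂0 : 0 ≤ M₂ := by obtain ⟨x, -, h⟩ := hM₂.1; rw [← h]; positivity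
  -- `X` maps `[0, 1/2]` into `[a, √(ab)]`, and `t ↦ X (1 - t)` maps it into `[√(ab), b]`
  have hFM₁ : ∀ t ∈ Icc (0:ℝ) (1/2), |F t| ≤ M₁ := fun t ht =>
    hM₁.2 ⟨X t, ⟨hX0 ▸ hXmono ht.1, hXhalf ▸ hXmono ht.2⟩, rfl⟩
  have hFM₂ : ∀ t ∈ Icc (0:ℝ) (1/2), |F (1 - t)| ≤ M₂ := fun t ht =>
    hM₂.2 ⟨X (1 - t), ⟨hXhalf ▸ hXmono (by linarith [ht.2]), hX1 ▸ hXmono (by linarith [ht.1])⟩, rfl⟩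
  have hkey := abs_mul_sub_integral_le (F := F) (F' := fun t => f' (X t) * (X t * L))
    (N₁ := fun t => K₂ * R ^ t) (N₂ := fun t => K₁ * Q ^ t)
    (continuous_const.mul (continuous_const_rpow hR0.ne'))
    (continuous_const.mul (continuous_const_rpow hQ0.ne')) hFd
    (fun t ht => by
      have ht1 : t ∈ Icc (0:ℝ) 1 := ⟨ht.1, by linarith [ht.2]⟩
      have hc := hconv a haI b hbI (1 - t) ⟨by linarith [ht1.2], by linarith [ht1.1]⟩
      rw [sub_sub_cancel, ← hXr] at hc
      have hd := mul_le_of_geometric ha0 hb0 hfa hfb (abs_nonneg _) (by linarith) hs ht1 hc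
      rw [← hXr] at hd
      rw [abs_mul, abs_mul, abs_of_pos (mul_pos (hXpos t) hL)]
      calc |f' (X t)| * (X t * L) * |F (1 - t)| = L * (X t * |f' (X t)|) * |F (1 - t)| := by ring
        _ ≤ L * (a * |f' a| * |f' b| ^ (1 - s) * R ^ t) * M₂ := by
          gcongr
          exact hFM₂ t ht
        _ = K₂ * R ^ t := by rw [hK₂]; ring)
    (fun t ht => by
      have ht1 : t ∈ Icc (0:ℝ) 1 := ⟨ht.1, by linarith [ht.2]⟩
      have hc := hconv b hbI a haI (1 - t) ⟨by linarith [ht1.2], by linarith [ht1.1]⟩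
      rw [sub_sub_cancel, ← hXr'] at hc
      have hd := mul_le_of_geometric hb0 ha0 hfb hfa (abs_nonneg _) (by linarith) hs ht1 hc
      rw [← hXr'] at hd
      rw [abs_mul, abs_mul, abs_of_pos (mul_pos (hXpos _) hL)]
      calc |f' (X (1 - t))| * (X (1 - t) * L) * |F t|
          = L * (X (1 - t) * |f' (X (1 - t))|) * |F t| := by ring
        _ ≤ L * (b * |f' b| * |f' a| ^ (1 - s) * Q ^ t) * M₁ := by
          gcongr
          exact hFM₁ t ht
        _ = K₁ * Q ^ t := by rw [hK₁]; ring)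
  have hF0 : F 0 = f a := by simp only [hFdef, hX0]
  have hF1 : F 1 = f b := by simp only [hFdef, hX1]
  rw [hsubst, ← mul_assoc, one_div_mul_cancel hL.ne', one_mul, ← hF0, ← hF1]
  refine hkey.trans ?_
  simp only [mul_left_comm _ K₂, mul_left_comm _ K₁, intervalIntegral.integral_const_mul]
  have hK₁0 : 0 ≤ K₁ := by positivity
  have hK₂0 : 0 ≤ K₂ := by positivity
  refine (add_le_add (mul_le_mul_of_nonneg_left (holder_half hR0 hq) hK₂0)
    (mul_le_mul_of_nonneg_left (holder_half hQ0 hq) hK₁0)).trans_eq ?_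
  rw [hK₁, hK₂]
  ring
end

section
/- Let f : I ⊆ (0,∞) → (0,∞) be differentiable on I°, a, b ∈ I° with a < b, f' integrable on [a,b], and let |f'|^q be s-geometrically convex on [a,b] for some q > 1 and s ∈ (0,1]. If |f'(a)| ≤ 1 ≤ |f'(b)|, then |f(a)f(b) − (1/(ln b − ln a)) ∫_a^b (f(x)/x)·f(ab/x) dx| ≤ (ln(b/a)/2)·((q−1)/(2q−1))^{1−1/q}·[ b·|f'(b)|·M₁·h₃(θ)^{1/q} + a·|f'(a)|^s·|f'(b)|^{1−s}·M₂·h₃(ϑ)^{1/q} ]. -/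
/-!
Put `k = log (b / a) / 2`, `X u = a * exp (k * u)`, `Y u = a * b / X u` and
`ψ u = f (X u) * f (Y u)`. As `u` runs over `[0, 1]`, `X u` increases from `a` to `√(a * b)` and
`Y u` decreases from `b` to `√(a * b)`. The substitution `x = X u` and the symmetry `x ↦ a * b / x`
turn the logarithmic mean of `f x * f (a * b / x)` into `∫₀¹ ψ` (`integral_subst`), and integration
by parts gives `f a * f b - ∫₀¹ ψ = -∫₀¹ (1 - u) * ψ' u`.

Here `ψ' = k * (X * f' X * f Y - f X * Y * f' Y)`. The values of `f` are bounded by `M₁`, `M₂`;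
`s`-geometric convexity between `a` and `b`, together with `|f' a| ≤ 1 ≤ |f' b|`, bounds
`X * |f' X|` and `Y * |f' Y|` by exponentials `C * τ ^ u` (`deriv_bound`, `left_factor`,
`right_factor`). Hölder's inequality for `(1 - u) * τ ^ u` (`holder_bound`) then produces the
constant and the `h₃` terms.

If `f' a = 0` were possible, the quotients on the right-hand side would be degenerate;
`deriv_left_ne_zero` excludes this case by Darboux's theorem.
-/

open Real MeasureTheory Set intervalIntegral

/-- Hölder's inequality with exponents `q / (q - 1)` and `q`, applied to `1 - u` and `τ ^ u`. -/
lemma holder_bound (q τ : ℝ) (hq : 1 < q) (hτ : 0 < τ) :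
    ∫ u in (0:ℝ)..1, (1 - u) * τ ^ u ≤
      ((q - 1) / (2 * q - 1)) ^ (1 - 1 / q) * (h₃ (τ ^ q)) ^ (1 / q) := by
  have hq0 : 0 < q := by linarith
  have hq1 : 0 < q - 1 := by linarith
  have hpq : (q / (q - 1)).HolderConjugate q := (Real.HolderConjugate.conjExponent hq).symm
  have hcτ : Continuous (fun u : ℝ => τ ^ u) := Real.continuous_const_rpow hτ.ne'
  have memLp_of_cont : ∀ (g : ℝ → ℝ) (p : ENNReal), Continuous g →
      MemLp g p (volume.restrict (Ioc (0:ℝ) 1)) := by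
    intro g p hg
    obtain ⟨C, hC⟩ := (isCompact_Icc (a := (0:ℝ)) (b := 1)).exists_bound_of_continuousOn
      hg.continuousOn
    refine MemLp.of_bound hg.aestronglyMeasurable C ?_
    filter_upwards [ae_restrict_mem measurableSet_Ioc] with x hx
    exact hC x (Ioc_subset_Icc_self hx)
  have key := MeasureTheory.integral_mul_le_Lp_mul_Lq_of_nonneg
    (μ := volume.restrict (Ioc (0:ℝ) 1)) hpq (f := fun u => 1 - u) (g := fun u => τ ^ u)
    (by
      filter_upwards [ae_restrict_mem measurableSet_Ioc] with x hx
      simpa using hx.2)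
    (Filter.Eventually.of_forall fun x => (Real.rpow_pos_of_pos hτ x).le)
    (memLp_of_cont _ _ (by fun_prop)) (memLp_of_cont _ _ hcτ)
  rw [← intervalIntegral.integral_of_le zero_le_one,
    ← intervalIntegral.integral_of_le zero_le_one,
    ← intervalIntegral.integral_of_le zero_le_one] at key
  have e1 : ∫ u in (0:ℝ)..1, (1 - u) ^ (q / (q - 1)) = (q - 1) / (2 * q - 1) := by
    have hp : 0 < q / (q - 1) := by positivity
    have h2 : 2 * q - 1 ≠ 0 := by linarith
    rw [intervalIntegral.integral_comp_sub_left (fun x => x ^ (q / (q - 1))) 1,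
      integral_rpow (Or.inl (by linarith))]
    have h3 : q / (q - 1) + 1 = (2 * q - 1) / (q - 1) := by field_simp; ring
    rw [h3, sub_self, sub_zero, Real.one_rpow, Real.zero_rpow (div_ne_zero h2 hq1.ne')]
    field_simp
    ring
  have e2 : ∫ u in (0:ℝ)..1, (τ ^ u) ^ q = h₃ (τ ^ q) := by
    have h4 : ∀ u : ℝ, (τ ^ u) ^ q = Real.exp (u * Real.log (τ ^ q)) := by
      intro u
      rw [← Real.rpow_mul hτ.le, Real.log_rpow hτ, Real.rpow_def_of_pos hτ]
      congr 1; ring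
    have hτq : 0 < τ ^ q := Real.rpow_pos_of_pos hτ q
    simp_rw [h4]
    unfold h₃
    split_ifs with h
    · simp [h]
    · have hl : Real.log (τ ^ q) ≠ 0 := Real.log_ne_zero_of_pos_of_ne_one hτq h
      rw [intervalIntegral.integral_comp_mul_right (fun x => Real.exp x) hl, integral_exp]
      simp [Real.exp_log hτq]
      field_simp
  have e3 : 1 / (q / (q - 1)) = 1 - 1 / q := by field_simp
  rw [e1, e2, e3] at key
  exact key

/-- `s`-geometric convexity of `|f'| ^ q`, with the exponents `l ^ s` and `(1 - l) ^ s` replaced by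
`s * l` and `1 - s * l`. This is allowed because `s * l ≤ l ^ s` while `|f' a| ≤ 1`, and
`(1 - l) ^ s ≤ 1 - s * l` (Bernoulli) while `1 ≤ |f' b|`. -/
lemma deriv_bound (v A B q s l : ℝ) (hv : 0 ≤ v) (hA : 0 < A) (hA1 : A ≤ 1) (hB : 1 ≤ B)
    (hq : 1 < q) (hs : s ∈ Set.Ioc (0:ℝ) 1) (hl : l ∈ Set.Icc (0:ℝ) 1)
    (h : v ^ q ≤ (A ^ q) ^ (l ^ s) * (B ^ q) ^ ((1 - l) ^ s)) :
    v ≤ A ^ (s * l) * B ^ (1 - s * l) := by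
  have hB0 : 0 < B := by linarith
  have hq0 : 0 < q := by linarith
  obtain ⟨hs0, hs1⟩ := hs
  obtain ⟨hl0, hl1⟩ := hl
  have h1 : s * l ≤ l ^ s :=
    (mul_le_of_le_one_left hl0 hs1).trans (Real.self_le_rpow_of_le_one hl0 hl1 hs1)
  have h2 : (1 - l) ^ s ≤ 1 - s * l := by
    have := rpow_one_add_le_one_add_mul_self (s := -l) (p := s) (by linarith) hs0.le hs1
    calc (1 - l) ^ s = (1 + -l) ^ s := by ring_nf
      _ ≤ _ := this
      _ = _ := by ring
  have h3 : v ≤ A ^ (l ^ s) * B ^ ((1 - l) ^ s) := by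
    rw [← Real.rpow_le_rpow_iff hv (by positivity) hq0]
    refine h.trans (le_of_eq ?_)
    rw [Real.mul_rpow (by positivity) (by positivity), ← Real.rpow_mul hA.le,
      ← Real.rpow_mul hA.le, ← Real.rpow_mul hB0.le, ← Real.rpow_mul hB0.le]
    ring_nf
  refine h3.trans ?_
  gcongr ?_ * ?_
  · exact Real.rpow_le_rpow_of_exponent_ge hA hA1 h1
  · exact Real.rpow_le_rpow_of_exponent_le hB h2

lemma right_factor (a b A B s u : ℝ) (ha : 0 < a) (hb : 0 < b) (hA : 0 < A) (hB : 0 < B) :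
    a ^ (u / 2) * b ^ (1 - u / 2) * (A ^ (s * (u / 2)) * B ^ (1 - s * (u / 2))) =
      b * B * ((a * A ^ s / (b * B ^ s)) ^ (1 / 2 : ℝ)) ^ u := by
  obtain ⟨a, rfl⟩ : ∃ t, Real.exp t = a := ⟨_, Real.exp_log ha⟩
  obtain ⟨b, rfl⟩ : ∃ t, Real.exp t = b := ⟨_, Real.exp_log hb⟩
  obtain ⟨A, rfl⟩ : ∃ t, Real.exp t = A := ⟨_, Real.exp_log hA⟩
  obtain ⟨B, rfl⟩ : ∃ t, Real.exp t = B := ⟨_, Real.exp_log hB⟩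
  simp only [← Real.exp_mul, ← Real.exp_add, ← Real.exp_sub]
  congr 1; ring

lemma left_factor (a b A B s u : ℝ) (ha : 0 < a) (hb : 0 < b) (hA : 0 < A) (hB : 0 < B) :
    a ^ (1 - u / 2) * b ^ (1 - (1 - u / 2)) *
        (A ^ (s * (1 - u / 2)) * B ^ (1 - s * (1 - u / 2))) =
      a * A ^ s * B ^ (1 - s) * ((b * B ^ s / (a * A ^ s)) ^ (1 / 2 : ℝ)) ^ u := by
  obtain ⟨a, rfl⟩ : ∃ t, Real.exp t = a := ⟨_, Real.exp_log ha⟩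
  obtain ⟨b, rfl⟩ : ∃ t, Real.exp t = b := ⟨_, Real.exp_log hb⟩
  obtain ⟨A, rfl⟩ : ∃ t, Real.exp t = A := ⟨_, Real.exp_log hA⟩
  obtain ⟨B, rfl⟩ : ∃ t, Real.exp t = B := ⟨_, Real.exp_log hB⟩
  simp only [← Real.exp_mul, ← Real.exp_add, ← Real.exp_sub]
  congr 1; ring

/-- The endpoint derivative cannot vanish at `a`: otherwise `f' = 0` on `[a, b)`, and Darboux's
theorem on the intermediate values of a derivative contradicts `1 ≤ |f' b|`. -/
lemma deriv_left_ne_zero (f f' : ℝ → ℝ) (a b q s : ℝ) (ha : 0 < a) (hab : a < b)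
    (hf : ∀ x ∈ Icc a b, HasDerivAt f (f' x) x) (hq : 1 < q)
    (hconv : ∀ x ∈ Set.Icc a b, ∀ y ∈ Set.Icc a b, ∀ l ∈ Set.Icc (0:ℝ) 1,
      |f' (x ^ l * y ^ (1 - l))| ^ q ≤ (|f' x| ^ q) ^ (l ^ s) * (|f' y| ^ q) ^ ((1 - l) ^ s))
    (hfb : 1 ≤ |f' b|) : f' a ≠ 0 := by
  intro h0
  have hb : 0 < b := ha.trans hab
  have hq0 : 0 < q := by linarith
  have hz : ∀ x ∈ Ico a b, f' x = 0 := by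
    intro x hx
    have hx0 : 0 < x := ha.trans_le hx.1
    have hlab : 0 < Real.log b - Real.log a := sub_pos.2 (Real.log_lt_log ha hab)
    have hxb : 0 < Real.log b - Real.log x := sub_pos.2 (Real.log_lt_log hx0 hx.2)
    have hax : Real.log a ≤ Real.log x := Real.log_le_log ha hx.1
    set l := (Real.log b - Real.log x) / (Real.log b - Real.log a) with hl
    have hl0 : 0 < l := div_pos hxb hlab
    have hl1 : l ≤ 1 := (div_le_one hlab).2 (by linarith)
    have hxl : a ^ l * b ^ (1 - l) = x := by
      rw [Real.rpow_def_of_pos ha, Real.rpow_def_of_pos hb, ← Real.exp_add]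
      conv_rhs => rw [← Real.exp_log hx0]
      congr 1
      rw [hl]; field_simp; ring
    have := hconv a (left_mem_Icc.2 hab.le) b (right_mem_Icc.2 hab.le) l ⟨hl0.le, hl1⟩
    rw [hxl, h0, abs_zero, Real.zero_rpow hq0.ne',
      Real.zero_rpow (Real.rpow_pos_of_pos hl0 s).ne', zero_mul] at this
    by_contra hne
    exact absurd this (not_le.2 (Real.rpow_pos_of_pos (abs_pos.2 hne) q))
  have hconst : f b - f a = 0 := by
    obtain ⟨c, hc, hc'⟩ := exists_hasDerivAt_eq_slope f f' hab
      (fun x hx => (hf x hx).continuousAt.continuousWithinAt)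
      (fun x hx => hf x (Ioo_subset_Icc_self hx))
    rw [hz c ⟨hc.1.le, hc.2⟩, eq_comm, div_eq_zero_iff] at hc'
    exact hc'.resolve_right (sub_ne_zero.2 hab.ne')
  rcases le_abs.1 hfb with h | h
  · obtain ⟨c, hc, hc'⟩ := exists_hasDerivWithinAt_eq_of_gt_of_lt (m := 1 / 2) hab.le
      (fun x hx => (hf x hx).hasDerivWithinAt) (by rw [h0]; norm_num) (by linarith)
    rw [hz c ⟨hc.1.le, hc.2⟩] at hc'
    norm_num at hc'
  · obtain ⟨c, hc, hc'⟩ := exists_hasDerivWithinAt_eq_of_lt_of_gt (m := -1 / 2) hab.le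
      (fun x hx => (hf x hx).hasDerivWithinAt) (by rw [h0]; norm_num) (by linarith)
    rw [hz c ⟨hc.1.le, hc.2⟩] at hc'
    norm_num at hc'

/-- The substitution `x = a * exp (k * u)`, `u ∈ [0, 2]`, folded at `u = 1` by the symmetry
`x ↦ a * b / x`. -/
lemma integral_subst (f : ℝ → ℝ) (a b k : ℝ) (ha : 0 < a) (hk : 0 < k)
    (hb : b = a * Real.exp (2 * k)) (hf : ContinuousOn f (Icc a b)) :
    ∫ x in a..b, (f x / x) * f (a * b / x) =
      2 * k * ∫ u in (0:ℝ)..1, f (a * Real.exp (k * u)) * f (b * Real.exp (-(k * u))) := by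
  have hb0 : 0 < b := by rw [hb]; positivity
  set ψ : ℝ → ℝ := fun u => f (a * Real.exp (k * u)) * f (b * Real.exp (-(k * u))) with hψ
  have hX : ∀ u ∈ Icc (0:ℝ) 2, a * Real.exp (k * u) ∈ Icc a b := by
    intro u hu
    constructor
    · exact le_mul_of_one_le_right ha.le (Real.one_le_exp (mul_nonneg hk.le hu.1))
    · rw [hb]
      exact mul_le_mul_of_nonneg_left (Real.exp_le_exp.2 (by nlinarith [hu.2])) ha.le
  have hY : ∀ u ∈ Icc (0:ℝ) 2, b * Real.exp (-(k * u)) ∈ Icc a b := by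
    intro u hu
    have := hX (2 - u) ⟨by linarith [hu.2], by linarith [hu.1]⟩
    convert this using 1
    rw [hb, mul_assoc, ← Real.exp_add]; ring_nf
  have hψc : ContinuousOn ψ (Icc 0 2) :=
    (hf.comp (by fun_prop) hX).mul (hf.comp (by fun_prop) hY)
  have hsub := intervalIntegral.integral_comp_mul_deriv'' (a := 0) (b := 2)
    (f := fun u => a * Real.exp (k * u)) (f' := fun u => k * (a * Real.exp (k * u)))
    (g := fun x => (f x / x) * f (a * b / x)) (by fun_prop)
    (by
      intro u _
      have : HasDerivAt (fun u => a * Real.exp (k * u)) (a * (Real.exp (k * u) * (k * 1))) u :=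
        (((hasDerivAt_id u).const_mul k).exp).const_mul a
      exact (this.congr_deriv (by ring)).hasDerivWithinAt)
    (by fun_prop)
    (by
      rw [uIcc_of_le (by norm_num : (0:ℝ) ≤ 2)]
      have hsubset : (fun u => a * Real.exp (k * u)) '' Icc 0 2 ⊆ Icc a b := by
        rintro _ ⟨u, hu, rfl⟩; exact hX u hu
      refine ContinuousOn.mono ?_ hsubset
      refine (hf.div continuousOn_id fun x hx => (ha.trans_le hx.1).ne').mul
        (hf.comp (continuousOn_const.div continuousOn_id fun x hx => (ha.trans_le hx.1).ne') ?_)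
      intro x hx
      have hx0 : 0 < x := ha.trans_le hx.1
      rw [mem_Icc]
      rw [le_div_iff₀ hx0, div_le_iff₀ hx0]
      exact ⟨by nlinarith [hx.2], by nlinarith [hx.1]⟩)
  have hends : a * Real.exp (k * 2) = b := by rw [hb, mul_comm k]
  simp only [mul_zero, Real.exp_zero, mul_one, hends] at hsub
  rw [← hsub]
  have h1 : ∀ u : ℝ, ((fun x => (f x / x) * f (a * b / x)) ∘ fun u => a * Real.exp (k * u)) u *
      (k * (a * Real.exp (k * u))) = k * ψ u := by
    intro u
    have hY' : a * b / (a * Real.exp (k * u)) = b * Real.exp (-(k * u)) := by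
      rw [Real.exp_neg]; field_simp
    simp only [Function.comp, hψ, hY']
    field_simp
  simp_rw [h1]
  rw [intervalIntegral.integral_const_mul]
  have hsym : ∀ u, ψ (2 - u) = ψ u := by
    intro u
    have e1 : a * Real.exp (k * (2 - u)) = b * Real.exp (-(k * u)) := by
      rw [hb, mul_assoc, ← Real.exp_add]; ring_nf
    have e2 : b * Real.exp (-(k * (2 - u))) = a * Real.exp (k * u) := by
      rw [hb, mul_assoc, ← Real.exp_add]; ring_nf
    simp only [hψ, e1, e2, mul_comm]
  have h2 : ∫ u in (1:ℝ)..2, ψ u = ∫ u in (0:ℝ)..1, ψ u := by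
    have := intervalIntegral.integral_comp_sub_left ψ (a := 0) (b := 1) 2
    simp_rw [hsym] at this
    rw [this]; norm_num
  have h3 := intervalIntegral.integral_add_adjacent_intervals (μ := volume) (f := ψ)
    (a := 0) (b := 1) (c := 2)
    ((hψc.mono (Icc_subset_Icc le_rfl (by norm_num))).intervalIntegrable_of_Icc (by norm_num))
    ((hψc.mono (Icc_subset_Icc (by norm_num) le_rfl)).intervalIntegrable_of_Icc (by norm_num))
  rw [← h3, h2]; ring

theorem stmt_12 (I : Set ℝ) (hI : I ⊆ Set.Ioi (0:ℝ)) (hI' : I.OrdConnected)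
    (f f' : ℝ → ℝ) (a b : ℝ) (ha : a ∈ interior I) (hb : b ∈ interior I) (hab : a < b)
    (hf : ∀ x ∈ interior I, HasDerivAt f (f' x) x)
    (hint : IntervalIntegrable f' volume a b)
    (hpos : ∀ x ∈ I, 0 < f x)
    (q s : ℝ) (hq : 1 < q) (hs : s ∈ Set.Ioc (0:ℝ) 1)
    (hconv : ∀ x ∈ Set.Icc a b, ∀ y ∈ Set.Icc a b, ∀ l ∈ Set.Icc (0:ℝ) 1,
      |f' (x ^ l * y ^ (1 - l))| ^ q ≤ (|f' x| ^ q) ^ (l ^ s) * (|f' y| ^ q) ^ ((1 - l) ^ s))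
    (M₁ M₂ : ℝ)
    (hM₁ : IsGreatest ((fun x => |f x|) '' Set.Icc a (Real.sqrt (a*b))) M₁)
    (hM₂ : IsGreatest ((fun x => |f x|) '' Set.Icc (Real.sqrt (a*b)) b) M₂)
    (hfa : |f' a| ≤ 1) (hfb : 1 ≤ |f' b|) :
    |f a * f b - (1 / (Real.log b - Real.log a)) * ∫ x in a..b, (f x / x) * f (a * b / x)|
      ≤ (Real.log (b / a) / 2) * ((q - 1) / (2 * q - 1)) ^ (1 - 1 / q) *
        (b * |f' b| * M₁ * (h₃ ((a * |f' a| ^ s / (b * |f' b| ^ s)) ^ (q / 2))) ^ (1 / q)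
          + a * |f' a| ^ s * |f' b| ^ (1 - s) * M₂ * (h₃ ((b * |f' b| ^ s / (a * |f' a| ^ s)) ^ (q / 2))) ^ (1 / q)) := by
  have hab0 : Icc a b ⊆ interior I := hI'.interior.out ha hb
  have ha0 : 0 < a := hI (interior_subset ha)
  have hb0 : 0 < b := ha0.trans hab
  have hf₁ : ∀ x ∈ Icc a b, HasDerivAt f (f' x) x := fun x hx => hf x (hab0 hx)
  have hfc : ContinuousOn f (Icc a b) := fun x hx => (hf₁ x hx).continuousAt.continuousWithinAt
  have hA : 0 < |f' a| :=
    abs_pos.2 (deriv_left_ne_zero f f' a b q s ha0 hab hf₁ hq hconv hfb)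
  have hB : 0 < |f' b| := by linarith
  have hq0 : 0 < q := by linarith
  obtain ⟨k, hk⟩ : ∃ k, k = Real.log (b / a) / 2 := ⟨_, rfl⟩
  have hk0 : 0 < k := by
    rw [hk]; exact half_pos (Real.log_pos ((one_lt_div ha0).2 hab))
  have hlog : Real.log b - Real.log a = 2 * k := by
    rw [hk, Real.log_div hb0.ne' ha0.ne']; ring
  have hbk : b = a * Real.exp (2 * k) := by
    rw [← hlog, Real.exp_sub, Real.exp_log hb0, Real.exp_log ha0]; field_simp
  rw [integral_subst f a b k ha0 hk0 hbk hfc, hlog, ← hk]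
  set X : ℝ → ℝ := fun u => a * Real.exp (k * u) with hX
  set Y : ℝ → ℝ := fun u => b * Real.exp (-(k * u)) with hY
  have hXr : ∀ u, X u = a ^ (1 - u / 2) * b ^ (1 - (1 - u / 2)) := by
    intro u
    rw [Real.rpow_def_of_pos ha0, Real.rpow_def_of_pos hb0, ← Real.exp_add]
    simp only [hX]
    conv_lhs => rw [← Real.exp_log ha0, ← Real.exp_add]
    congr 1
    linear_combination (-u / 2) * hlog
  have hYr : ∀ u, Y u = a ^ (u / 2) * b ^ (1 - u / 2) := by
    intro u
    rw [Real.rpow_def_of_pos ha0, Real.rpow_def_of_pos hb0, ← Real.exp_add]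
    simp only [hY]
    conv_lhs => rw [← Real.exp_log hb0, ← Real.exp_add]
    congr 1
    linear_combination (u / 2) * hlog
  have hsq : Real.sqrt (a * b) = a * Real.exp k := by
    have : a * b = (a * Real.exp k) ^ 2 := by
      rw [hbk, two_mul, Real.exp_add]; ring
    rw [this, Real.sqrt_sq (by positivity)]
  have hsq' : Real.sqrt (a * b) = b * Real.exp (-k) := by
    rw [hsq, hbk, mul_assoc, ← Real.exp_add]; ring_nf
  have hXm : ∀ u ∈ Icc (0:ℝ) 1, X u ∈ Icc a (Real.sqrt (a * b)) := by
    intro u hu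
    constructor
    · exact le_mul_of_one_le_right ha0.le (Real.one_le_exp (mul_nonneg hk0.le hu.1))
    · rw [hsq]; simp only [hX]; gcongr; nlinarith [hu.2]
  have hYm : ∀ u ∈ Icc (0:ℝ) 1, Y u ∈ Icc (Real.sqrt (a * b)) b := by
    intro u hu
    constructor
    · rw [hsq']; simp only [hY]; gcongr; nlinarith [hu.2]
    · refine mul_le_of_le_one_right hb0.le (Real.exp_le_one_iff.2 ?_)
      nlinarith [hu.1]
  have hga : a ≤ Real.sqrt (a * b) := by
    rw [hsq]; exact le_mul_of_one_le_right ha0.le (Real.one_le_exp hk0.le)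
  have hgb : Real.sqrt (a * b) ≤ b := by
    rw [hsq']; exact mul_le_of_le_one_right hb0.le (Real.exp_le_one_iff.2 (by linarith))
  have hXI : ∀ u ∈ Icc (0:ℝ) 1, X u ∈ Icc a b := fun u hu => Icc_subset_Icc le_rfl hgb (hXm u hu)
  have hYI : ∀ u ∈ Icc (0:ℝ) 1, Y u ∈ Icc a b := fun u hu => Icc_subset_Icc hga le_rfl (hYm u hu)
  have hX0 : ∀ u, 0 < X u := fun u => by positivity
  have hY0 : ∀ u, 0 < Y u := fun u => by positivity
  have hM₁' : ∀ u ∈ Icc (0:ℝ) 1, |f (X u)| ≤ M₁ := fun u hu => hM₁.2 ⟨_, hXm u hu, rfl⟩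
  have hM₂' : ∀ u ∈ Icc (0:ℝ) 1, |f (Y u)| ≤ M₂ := fun u hu => hM₂.2 ⟨_, hYm u hu, rfl⟩
  have hM₁0 : 0 ≤ M₁ := (abs_nonneg _).trans (hM₁' 0 (by simp))
  have hM₂0 : 0 ≤ M₂ := (abs_nonneg _).trans (hM₂' 0 (by simp))
  have hd : ∀ l ∈ Icc (0:ℝ) 1,
      |f' (a ^ l * b ^ (1 - l))| ≤ |f' a| ^ (s * l) * |f' b| ^ (1 - s * l) := fun l hl =>
    deriv_bound _ _ _ q s l (abs_nonneg _) hA hfa hfb hq hs hl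
      (hconv a (left_mem_Icc.2 hab.le) b (right_mem_Icc.2 hab.le) l hl)
  set τ := (a * |f' a| ^ s / (b * |f' b| ^ s)) ^ (1 / 2 : ℝ) with hτ
  set σ := (b * |f' b| ^ s / (a * |f' a| ^ s)) ^ (1 / 2 : ℝ) with hσ
  have hτ0 : 0 < τ := by positivity
  have hσ0 : 0 < σ := by positivity
  have hYd : ∀ u ∈ Icc (0:ℝ) 1, Y u * |f' (Y u)| ≤ b * |f' b| * τ ^ u := by
    intro u hu
    rw [hτ, ← right_factor a b _ _ s u ha0 hb0 hA hB, ← hYr u]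
    refine mul_le_mul_of_nonneg_left ?_ (hY0 u).le
    rw [hYr u]
    exact hd _ ⟨by linarith [hu.1], by linarith [hu.2]⟩
  have hXd : ∀ u ∈ Icc (0:ℝ) 1,
      X u * |f' (X u)| ≤ a * |f' a| ^ s * |f' b| ^ (1 - s) * σ ^ u := by
    intro u hu
    rw [hσ, ← left_factor a b _ _ s u ha0 hb0 hA hB, ← hXr u]
    refine mul_le_mul_of_nonneg_left ?_ (hX0 u).le
    rw [hXr u]
    exact hd _ ⟨by linarith [hu.2], by linarith [hu.1]⟩
  have hcτ : Continuous (fun u : ℝ => τ ^ u) := Real.continuous_const_rpow hτ0.ne'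
  have hcσ : Continuous (fun u : ℝ => σ ^ u) := Real.continuous_const_rpow hσ0.ne'
  set ψ : ℝ → ℝ := fun u => f (X u) * f (Y u) with hψ
  set D : ℝ → ℝ := fun u =>
    (f' (X u) * (k * X u)) * f (Y u) + f (X u) * (f' (Y u) * (-(k * Y u))) with hD
  set G : ℝ → ℝ := fun u =>
    k * (b * |f' b| * M₁ * τ ^ u + a * |f' a| ^ s * |f' b| ^ (1 - s) * M₂ * σ ^ u) with hG
  have hGc : Continuous G := by fun_prop
  have hψd : ∀ u ∈ Icc (0:ℝ) 1, HasDerivAt ψ (D u) u := by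
    intro u hu
    have h1 : HasDerivAt X (k * X u) u := by
      have : HasDerivAt X (a * (Real.exp (k * u) * (k * 1))) u :=
        (((hasDerivAt_id u).const_mul k).exp).const_mul a
      convert this using 1; simp only [hX]; ring
    have h2 : HasDerivAt Y (-(k * Y u)) u := by
      have : HasDerivAt Y (b * (Real.exp (-(k * u)) * (-(k * 1)))) u :=
        (((hasDerivAt_id u).const_mul k).neg.exp).const_mul b
      convert this using 1; simp only [hY]; ring
    exact ((hf₁ _ (hXI u hu)).comp u h1).mul ((hf₁ _ (hYI u hu)).comp u h2)
  have hDG : ∀ u ∈ Icc (0:ℝ) 1, |D u| ≤ G u := by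
    intro u hu
    have h1 : |(f' (X u) * (k * X u)) * f (Y u)| = k * ((X u * |f' (X u)|) * |f (Y u)|) := by
      rw [abs_mul, abs_mul, abs_mul, abs_of_pos hk0, abs_of_pos (hX0 u)]; ring
    have h2 : |f (X u) * (f' (Y u) * (-(k * Y u)))| = k * ((Y u * |f' (Y u)|) * |f (X u)|) := by
      rw [abs_mul, abs_mul, abs_neg, abs_mul, abs_of_pos hk0, abs_of_pos (hY0 u)]; ring
    calc |D u| ≤ _ := abs_add_le _ _
      _ = k * ((X u * |f' (X u)|) * |f (Y u)| + (Y u * |f' (Y u)|) * |f (X u)|) := by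
        rw [h1, h2]; ring
      _ ≤ k * ((a * |f' a| ^ s * |f' b| ^ (1 - s) * σ ^ u) * M₂ + (b * |f' b| * τ ^ u) * M₁) := by
        refine mul_le_mul_of_nonneg_left (add_le_add ?_ ?_) hk0.le
        · exact mul_le_mul (hXd u hu) (hM₂' u hu) (abs_nonneg _) (by positivity)
        · exact mul_le_mul (hYd u hu) (hM₁' u hu) (abs_nonneg _) (by positivity)
      _ = G u := by simp only [hG]; ring
  -- `D` agrees on `[0, 1]` with `deriv ψ`, which is measurable, and `D` is bounded there.
  have hDint : IntervalIntegrable D volume 0 1 := by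
    rw [intervalIntegrable_iff_integrableOn_Ioc_of_le zero_le_one]
    have hGi : IntegrableOn G (Ioc 0 1) volume :=
      (hGc.integrableOn_Icc (a := 0) (b := 1)).mono_set Ioc_subset_Icc_self
    refine Integrable.mono' hGi ?_ ?_
    · refine (measurable_deriv ψ).aestronglyMeasurable.congr ?_
      filter_upwards [ae_restrict_mem measurableSet_Ioc] with u hu
      exact (hψd u (Ioc_subset_Icc_self hu)).deriv
    · filter_upwards [ae_restrict_mem measurableSet_Ioc] with u hu
      exact hDG u (Ioc_subset_Icc_self hu)
  have hparts := intervalIntegral.integral_mul_deriv_eq_deriv_mul (a := 0) (b := 1)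
    (u := fun u : ℝ => 1 - u) (u' := fun _ => -1) (v := ψ) (v' := D)
    (fun u _ => (hasDerivAt_id u).const_sub 1)
    (fun u hu => hψd u (by rwa [uIcc_of_le zero_le_one] at hu))
    intervalIntegrable_const hDint
  have hψ0 : ψ 0 = f a * f b := by simp [hψ, hX, hY]
  have hid : f a * f b - 1 / (2 * k) * (2 * k * ∫ u in (0:ℝ)..1, ψ u) =
      -∫ u in (0:ℝ)..1, (1 - u) * D u := by
    rw [hparts, hψ0, intervalIntegral.integral_const_mul]
    field_simp
    ring
  rw [hid, abs_neg]
  have hτq : (a * |f' a| ^ s / (b * |f' b| ^ s)) ^ (q / 2) = τ ^ q := by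
    rw [hτ, ← Real.rpow_mul (by positivity)]; ring_nf
  have hσq : (b * |f' b| ^ s / (a * |f' a| ^ s)) ^ (q / 2) = σ ^ q := by
    rw [hσ, ← Real.rpow_mul (by positivity)]; ring_nf
  rw [hτq, hσq]
  calc |∫ u in (0:ℝ)..1, (1 - u) * D u|
      ≤ ∫ u in (0:ℝ)..1, (1 - u) * G u := by
        rw [← Real.norm_eq_abs]
        refine intervalIntegral.norm_integral_le_of_norm_le zero_le_one ?_
          ((by fun_prop : Continuous fun u => (1 - u) * G u).intervalIntegrable _ _)
        refine Filter.Eventually.of_forall fun u hu => ?_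
        have h1 : 0 ≤ 1 - u := by linarith [hu.2]
        rw [Real.norm_eq_abs, abs_mul, abs_of_nonneg h1]
        exact mul_le_mul_of_nonneg_left (hDG u (Ioc_subset_Icc_self hu)) h1
    _ = k * (b * |f' b| * M₁ * (∫ u in (0:ℝ)..1, (1 - u) * τ ^ u) +
          a * |f' a| ^ s * |f' b| ^ (1 - s) * M₂ * ∫ u in (0:ℝ)..1, (1 - u) * σ ^ u) := by
        rw [← intervalIntegral.integral_const_mul, ← intervalIntegral.integral_const_mul,
          ← intervalIntegral.integral_add
            ((by fun_prop : Continuous _).intervalIntegrable _ _)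
            ((by fun_prop : Continuous _).intervalIntegrable _ _),
          ← intervalIntegral.integral_const_mul]
        congr 1
        ext u
        simp only [hG]
        ring
    _ ≤ k * (b * |f' b| * M₁ *
            (((q - 1) / (2 * q - 1)) ^ (1 - 1 / q) * (h₃ (τ ^ q)) ^ (1 / q)) +
          a * |f' a| ^ s * |f' b| ^ (1 - s) * M₂ *
            (((q - 1) / (2 * q - 1)) ^ (1 - 1 / q) * (h₃ (σ ^ q)) ^ (1 / q))) := by
        gcongr
        · exact holder_bound q τ hq hτ0
        · exact holder_bound q σ hq hσ0
    _ = _ := by ring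
end

section
/- Let f : I ⊆ (0,∞) → (0,∞) be differentiable on I°, a, b ∈ I° with a < b, f' integrable on [a,b], and let |f'|^q be s-geometrically convex on [a,b] for some q > 1 and s ∈ (0,1]. If |f'(a)| ≤ 1 and |f'(b)| ≤ 1, then |f(√(ab))² − (1/(ln b − ln a)) ∫_a^b (f(x)/x)·f(ab/x) dx| ≤ (ln(b/a)/2)·((q−1)/(2q−1))^{1−1/q}·[ b·|f'(b)|^s·M₁·h₃(θ)^{1/q} + a·|f'(a)|^s·M₂·h₃(ϑ)^{1/q} ]. -/
/-! Put `L = log b - log a` and parametrise `[a, b]` geometrically by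
`k u = a ^ (1 - u / 2) * b ^ (u / 2)`, `u ∈ [0, 2]`, so that `k (2 - u) = a * b / k u` and
`k 1 = √(a * b)`. With `G u = f (k u) * f (k (2 - u))`, which is symmetric about `1`, the left-hand
side is `G 1 - ∫₀¹ G = ∫₀¹ u * G' u`, by substitution and integration by parts. The derivative `G'`
consists of two terms, in which the factors without `f'` are bounded by `M₁` and `M₂`.

Convexity gives `|f' (k u)| * k u ≤ A ^ (1 - u / 2) * B ^ (u / 2)` with `A = a * |f' a| ^ s` and
`B = b * |f' b| ^ s` (`deriv_mul_le`), since `s * l ≤ l ^ s` and `|f' a|, |f' b| ≤ 1`.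
What remains is Hölder's inequality for `u` and the exponential `(B / A) ^ (u / 2)`
(`integral_mul_const_rpow_le`, `integral_geom_le`), together with `∫₀¹ v ^ u = h₃ v`. If `f'`
vanishes at an endpoint, it vanishes on `(a, b)`, and both sides are zero.
-/

open Real MeasureTheory Set intervalIntegral

lemma integral_const_rpow {v : ℝ} (hv : 0 < v) : ∫ u in (0:ℝ)..1, v ^ u = h₃ v := by
  unfold h₃
  split_ifs with h
  · simp [h]
  · have hl : Real.log v ≠ 0 := Real.log_ne_zero_of_pos_of_ne_one hv h
    have hd : ∀ u ∈ uIcc (0:ℝ) 1, HasDerivAt (fun u : ℝ => v ^ u / Real.log v) (v ^ u) u := by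
      intro u _
      have := ((hasStrictDerivAt_const_rpow hv u).hasDerivAt).div_const (Real.log v)
      rwa [mul_div_cancel_right₀ _ hl] at this
    rw [integral_eq_sub_of_hasDerivAt hd
      ((continuous_const_rpow hv.ne').intervalIntegrable _ _)]
    simp
    ring

lemma integral_mul_const_rpow_le {q r : ℝ} (hq : 1 < q) (hr : 0 < r) :
    ∫ u in (0:ℝ)..1, u * r ^ u
      ≤ ((q - 1) / (2 * q - 1)) ^ (1 - 1 / q) * (h₃ (r ^ q)) ^ (1 / q) := by
  have hpq : (q / (q - 1)).HolderConjugate q := by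
    rw [Real.holderConjugate_comm, Real.holderConjugate_iff]
    refine ⟨hq, ?_⟩
    have : q - 1 ≠ 0 := by linarith
    field_simp
    ring
  have h0 : ∀ᵐ u ∂(volume.restrict (Ioc (0:ℝ) 1)), u ∈ Ioc (0:ℝ) 1 :=
    ae_restrict_mem measurableSet_Ioc
  have hc : Continuous fun u : ℝ => r ^ u := continuous_const_rpow hr.ne'
  have key := integral_mul_le_Lp_mul_Lq_of_nonneg (μ := volume.restrict (Ioc (0:ℝ) 1)) hpq
    (f := fun u => u) (g := fun u => r ^ u)
    (by filter_upwards [h0] with u hu using hu.1.le)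
    (by filter_upwards [h0] with u hu using (rpow_pos_of_pos hr u).le)
    (by
      refine MemLp.of_bound (by fun_prop) 1 ?_
      filter_upwards [h0] with u hu
      rw [Real.norm_eq_abs, abs_of_pos hu.1]; exact hu.2)
    (by
      obtain ⟨K, hK⟩ := isCompact_Icc.exists_bound_of_continuousOn
        (hc.continuousOn (s := Icc (0:ℝ) 1))
      refine MemLp.of_bound hc.aestronglyMeasurable K ?_
      filter_upwards [h0] with u hu using hK u ⟨hu.1.le, hu.2⟩)
  rw [← integral_of_le zero_le_one, ← integral_of_le zero_le_one,
    ← integral_of_le zero_le_one] at key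
  have e1 : ∫ u in (0:ℝ)..1, u ^ (q / (q - 1)) = (q - 1) / (2 * q - 1) := by
    have h1 : 0 < q - 1 := by linarith
    have h2 : 0 < q / (q - 1) := by positivity
    rw [integral_rpow (Or.inl (by linarith))]
    rw [one_rpow, zero_rpow (by positivity)]
    have h3 : q / (q - 1) + 1 = (2 * q - 1) / (q - 1) := by
      field_simp
      ring
    rw [h3, sub_zero, one_div_div]
  have e2 : ∫ u in (0:ℝ)..1, (r ^ u) ^ q = h₃ (r ^ q) := by
    rw [← integral_const_rpow (rpow_pos_of_pos hr q)]
    congr 1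
    ext u
    rw [← rpow_mul hr.le, ← rpow_mul hr.le, mul_comm]
  have e3 : 1 / (q / (q - 1)) = 1 - 1 / q := by field_simp
  rwa [e1, e2, e3] at key

/-- The Hölder bound for the weighted geometric mean of `A` and `B`. It also covers `A = 0` and
`B = 0`, where the integrand vanishes on `(0, 1)` and the right-hand side is zero since
`h₃ 0 = 0`. -/
lemma integral_geom_le {q A B : ℝ} (hq : 1 < q) (hA : 0 ≤ A) (hB : 0 ≤ B) :
    ∫ u in (0:ℝ)..1, u * (A ^ (1 - u / 2) * B ^ (u / 2))
      ≤ ((q - 1) / (2 * q - 1)) ^ (1 - 1 / q) * (A * (h₃ ((B / A) ^ (q / 2))) ^ (1 / q)) := by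
  have hq2 : q / 2 ≠ 0 := by linarith
  have hq1 : q⁻¹ ≠ 0 := inv_ne_zero (by linarith)
  rcases hA.eq_or_lt with rfl | hA
  · have : ∫ u in (0:ℝ)..1, u * ((0:ℝ) ^ (1 - u / 2) * B ^ (u / 2)) = ∫ u in (0:ℝ)..1, (0:ℝ) := by
      refine integral_congr fun u hu => ?_
      rw [uIcc_of_le zero_le_one] at hu
      have hu' : 1 - u / 2 ≠ 0 := by linarith [hu.2]
      change u * ((0:ℝ) ^ (1 - u / 2) * B ^ (u / 2)) = 0
      rw [zero_rpow hu']
      ring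
    rw [this]; simp
  rcases hB.eq_or_lt with rfl | hB
  · have : ∫ u in (0:ℝ)..1, u * (A ^ (1 - u / 2) * (0:ℝ) ^ (u / 2)) = ∫ u in (0:ℝ)..1, (0:ℝ) := by
      refine integral_congr fun u hu => ?_
      rcases eq_or_ne u 0 with rfl | h
      · simp
      · rw [zero_rpow (by simpa using h)]
        ring
    rw [this]; simp [h₃, hq2, hq1]
  have hr : 0 < (B / A) ^ (1 / 2 : ℝ) := by positivity
  have key := mul_le_mul_of_nonneg_left (integral_mul_const_rpow_le hq hr) hA.le
  rw [← intervalIntegral.integral_const_mul, ← rpow_mul (by positivity : (0:ℝ) ≤ B / A)] at key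
  calc _ = ∫ u in (0:ℝ)..1, A * (u * ((B / A) ^ (1 / 2 : ℝ)) ^ u) := by
        congr 1
        ext u
        rw [← rpow_mul (by positivity), div_rpow hB.le hA.le, rpow_sub hA, rpow_one]
        have : 1 / 2 * u = u / 2 := by ring
        rw [this]
        ring
    _ ≤ _ := key
    _ = _ := by
      have : 1 / 2 * q = q / 2 := by ring
      rw [this]; ring

lemma rpow_rpow_le {p q s l : ℝ} (hp : 0 ≤ p) (hp1 : p ≤ 1) (hq : 1 < q) (hs : s ∈ Ioc (0:ℝ) 1)
    (hl : l ∈ Ioo (0:ℝ) 1) : (p ^ q) ^ (l ^ s) ≤ ((p ^ s) ^ l) ^ q := by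
  have hls : l ≤ l ^ s := by
    simpa using rpow_le_rpow_of_exponent_ge hl.1 hl.2.le hs.2
  have hsl : s * l ≤ l ^ s := (mul_le_of_le_one_left hl.1.le hs.2).trans hls
  have hslp : 0 < s * l := mul_pos hs.1 hl.1
  rw [← rpow_mul hp, ← rpow_mul hp, ← rpow_mul hp]
  refine rpow_le_rpow_of_exponent_ge_of_imp hp hp1 ?_ ?_
  · nlinarith
  · intro _ h
    nlinarith

/-- For `|f' a|, |f' b| ≤ 1`, `s`-geometric convexity of `|f'| ^ q` bounds `|f' x| * x` by a
weighted geometric mean of `a * |f' a| ^ s` and `b * |f' b| ^ s`. -/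
lemma deriv_mul_le {f' : ℝ → ℝ} {a b q s l : ℝ} (ha : 0 < a) (hb : 0 < b)
    (hq : 1 < q) (hs : s ∈ Ioc (0:ℝ) 1) (hl : l ∈ Ioo (0:ℝ) 1)
    (hconv : |f' (a ^ l * b ^ (1 - l))| ^ q
      ≤ (|f' a| ^ q) ^ (l ^ s) * (|f' b| ^ q) ^ ((1 - l) ^ s))
    (hfa : |f' a| ≤ 1) (hfb : |f' b| ≤ 1) :
    |f' (a ^ l * b ^ (1 - l))| * (a ^ l * b ^ (1 - l))
      ≤ (a * |f' a| ^ s) ^ l * (b * |f' b| ^ s) ^ (1 - l) := by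
  have hl' : 1 - l ∈ Ioo (0:ℝ) 1 := ⟨by linarith [hl.2], by linarith [hl.1]⟩
  have h1 : |f' (a ^ l * b ^ (1 - l))| ^ q ≤ ((|f' a| ^ s) ^ l * (|f' b| ^ s) ^ (1 - l)) ^ q := by
    rw [mul_rpow (by positivity) (by positivity)]
    exact hconv.trans (mul_le_mul (rpow_rpow_le (abs_nonneg _) hfa hq hs hl)
      (rpow_rpow_le (abs_nonneg _) hfb hq hs hl') (by positivity) (by positivity))
  have h2 := (rpow_le_rpow_iff (abs_nonneg _) (by positivity) (by linarith)).1 h1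
  rw [mul_rpow ha.le (by positivity), mul_rpow hb.le (by positivity)]
  calc _ ≤ ((|f' a| ^ s) ^ l * (|f' b| ^ s) ^ (1 - l)) * (a ^ l * b ^ (1 - l)) := by gcongr
    _ = _ := by ring

lemma intervalIntegrable_geom {A B : ℝ} (hA : 0 ≤ A) (hB : 0 ≤ B) :
    IntervalIntegrable (fun u : ℝ => A ^ (1 - u / 2) * B ^ (u / 2)) volume 0 1 := by
  rw [intervalIntegrable_iff_integrableOn_Ioc_of_le zero_le_one]
  refine Measure.integrableOn_of_bounded (M := max A 1 * max B 1) (by simp)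
    (Measurable.aestronglyMeasurable (by fun_prop)) ?_
  filter_upwards [ae_restrict_mem measurableSet_Ioc] with u hu
  rw [Real.norm_eq_abs, abs_of_nonneg (by positivity)]
  have aux : ∀ C e : ℝ, 0 ≤ C → 0 ≤ e → e ≤ 1 → C ^ e ≤ max C 1 := fun C e hC h0 h1 =>
    calc C ^ e ≤ (max C 1) ^ e := rpow_le_rpow hC (le_max_left _ _) h0
      _ ≤ (max C 1) ^ (1:ℝ) := rpow_le_rpow_of_exponent_le (le_max_right _ _) h1
      _ = _ := rpow_one _
  exact mul_le_mul (aux _ _ hA (by linarith [hu.2]) (by linarith [hu.1]))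
    (aux _ _ hB (by linarith [hu.1]) (by linarith [hu.2])) (by positivity) (by positivity)

/-- The geometric parametrisation of `[a, b]`: `geo a b u = a ^ (1 - u / 2) * b ^ (u / 2)` for
`u ∈ [0, 2]`. -/
noncomputable def geo (a b u : ℝ) : ℝ :=
  Real.exp ((1 - u / 2) * Real.log a + u / 2 * Real.log b)

lemma geo_eq {a b : ℝ} (ha : 0 < a) (hb : 0 < b) (u : ℝ) :
    geo a b u = a ^ (1 - u / 2) * b ^ (u / 2) := by
  rw [geo, Real.exp_add, rpow_def_of_pos ha, rpow_def_of_pos hb, mul_comm (Real.log a),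
    mul_comm (Real.log b)]

lemma geo_pos (a b u : ℝ) : 0 < geo a b u := Real.exp_pos _

lemma geo_zero {a b : ℝ} (ha : 0 < a) : geo a b 0 = a := by simp [geo, Real.exp_log ha]

lemma geo_two {a b : ℝ} (hb : 0 < b) : geo a b 2 = b := by simp [geo, Real.exp_log hb]

lemma geo_one {a b : ℝ} (ha : 0 < a) (hb : 0 < b) : geo a b 1 = Real.sqrt (a * b) := by
  rw [geo_eq ha hb, Real.sqrt_eq_rpow, mul_rpow ha.le hb.le]
  norm_num

lemma geo_two_sub {a b : ℝ} (ha : 0 < a) (hb : 0 < b) (u : ℝ) :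
    geo a b (2 - u) = a * b / geo a b u := by
  rw [eq_div_iff (geo_pos a b u).ne', geo, geo, ← Real.exp_add]
  conv_rhs => rw [← Real.exp_log ha, ← Real.exp_log hb, ← Real.exp_add]
  congr 1
  ring

lemma geo_hasDerivAt (a b u : ℝ) :
    HasDerivAt (geo a b) (geo a b u * ((Real.log b - Real.log a) / 2)) u := by
  have h : HasDerivAt (fun u : ℝ => (1 - u / 2) * Real.log a + u / 2 * Real.log b)
      ((Real.log b - Real.log a) / 2) u := by
    have h1 := ((((hasDerivAt_id u).div_const 2).const_sub 1).mul_const (Real.log a)).add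
      (((hasDerivAt_id u).div_const 2).mul_const (Real.log b))
    exact h1.congr_deriv (by ring)
  exact h.exp

lemma geo_mono {a b : ℝ} (ha : 0 < a) (hab : a < b) : Monotone (geo a b) := by
  intro u v h
  have := Real.log_lt_log ha hab
  unfold geo
  apply Real.exp_le_exp.2
  nlinarith

theorem stmt_14 (I : Set ℝ) (hI : I ⊆ Set.Ioi (0:ℝ)) (hI' : I.OrdConnected)
    (f f' : ℝ → ℝ) (a b : ℝ) (ha : a ∈ interior I) (hb : b ∈ interior I) (hab : a < b)
    (hf : ∀ x ∈ interior I, HasDerivAt f (f' x) x)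
    (hint : IntervalIntegrable f' volume a b)
    (hpos : ∀ x ∈ I, 0 < f x)
    (q s : ℝ) (hq : 1 < q) (hs : s ∈ Set.Ioc (0:ℝ) 1)
    (hconv : ∀ x ∈ Set.Icc a b, ∀ y ∈ Set.Icc a b, ∀ l ∈ Set.Icc (0:ℝ) 1,
      |f' (x ^ l * y ^ (1 - l))| ^ q ≤ (|f' x| ^ q) ^ (l ^ s) * (|f' y| ^ q) ^ ((1 - l) ^ s))
    (M₁ M₂ : ℝ)
    (hM₁ : IsGreatest ((fun x => |f x|) '' Set.Icc a (Real.sqrt (a*b))) M₁)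
    (hM₂ : IsGreatest ((fun x => |f x|) '' Set.Icc (Real.sqrt (a*b)) b) M₂)
    (hfa : |f' a| ≤ 1) (hfb : |f' b| ≤ 1) :
    |f (Real.sqrt (a*b)) ^ 2 - (1 / (Real.log b - Real.log a)) * ∫ x in a..b, (f x / x) * f (a * b / x)|
      ≤ (Real.log (b / a) / 2) * ((q - 1) / (2 * q - 1)) ^ (1 - 1 / q) *
        (b * |f' b| ^ s * M₁ * (h₃ ((a * |f' a| ^ s / (b * |f' b| ^ s)) ^ (q / 2))) ^ (1 / q)
          + a * |f' a| ^ s * M₂ * (h₃ ((b * |f' b| ^ s / (a * |f' a| ^ s)) ^ (q / 2))) ^ (1 / q)) := by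
  have haI := interior_subset ha
  have hbI := interior_subset hb
  have ha0 : 0 < a := hI haI
  have hb0 : 0 < b := hI hbI
  have hIcc : Icc a b ⊆ interior I := hI'.interior.out ha hb
  have hL : 0 < Real.log b - Real.log a := sub_pos.2 (Real.log_lt_log ha0 hab)
  set L := Real.log b - Real.log a with hLdef
  set k := geo a b with hk
  have hk0 : k 0 = a := geo_zero ha0
  have hk1 : k 1 = Real.sqrt (a * b) := geo_one ha0 hb0
  have hk2 : k 2 = b := geo_two hb0
  have hmono : Monotone k := geo_mono ha0 hab
  have hks : ∀ u, k (2 - u) = a * b / k u := geo_two_sub ha0 hb0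
  have hkd : ∀ u, HasDerivAt k (k u * (L / 2)) u := geo_hasDerivAt a b
  have hkc : Continuous k := continuous_iff_continuousAt.2 fun u => (hkd u).continuousAt
  have hkmem : ∀ u ∈ Icc (0:ℝ) 2, k u ∈ Icc a b := fun u hu =>
    ⟨hk0 ▸ hmono hu.1, hk2 ▸ hmono hu.2⟩
  have hfc : ContinuousOn f (Icc a b) := fun x hx =>
    (hf x (hIcc hx)).continuousAt.continuousWithinAt
  set φ : ℝ → ℝ := fun u => f (k u) with hφ
  have hφd : ∀ u ∈ Icc (0:ℝ) 2, HasDerivAt φ (f' (k u) * (k u * (L / 2))) u := fun u hu =>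
    (hf _ (hIcc (hkmem u hu))).comp u (hkd u)
  set G : ℝ → ℝ := fun u => φ u * φ (2 - u) with hG
  set D : ℝ → ℝ := fun u => f' (k u) * (k u * (L / 2)) * φ (2 - u)
    - φ u * (f' (k (2 - u)) * (k (2 - u) * (L / 2))) with hD
  have hGd : ∀ u ∈ Icc (0:ℝ) 2, HasDerivAt G (D u) u := by
    intro u hu
    have h2 : HasDerivAt (fun u => φ (2 - u)) (-(f' (k (2 - u)) * (k (2 - u) * (L / 2)))) u := by
      have := HasDerivAt.comp_const_sub 2 u
        (hφd (2 - u) ⟨by linarith [hu.2], by linarith [hu.1]⟩)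
      exact this
    exact ((hφd u hu).mul h2).congr_deriv (by simp only [hD]; ring)
  have hGc : ContinuousOn G (Icc 0 2) := fun u hu => (hGd u hu).continuousAt.continuousWithinAt
  -- The substitution `x = k u`.
  have hsubst : ∫ x in a..b, (f x / x) * f (a * b / x) = L / 2 * ∫ u in (0:ℝ)..2, G u := by
    have hg : ContinuousOn (fun x => (f x / x) * f (a * b / x)) (Icc a b) := by
      have hne : ∀ x ∈ Icc a b, x ≠ 0 := fun x hx => (ha0.trans_le hx.1).ne'
      refine (hfc.div continuousOn_id hne).mul
        (hfc.comp (continuousOn_const.div continuousOn_id hne) fun x hx => ?_)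
      have hx0 : 0 < x := ha0.trans_le hx.1
      constructor
      · change a ≤ a * b / x
        rw [le_div_iff₀ hx0]
        exact mul_le_mul_of_nonneg_left hx.2 ha0.le
      · change a * b / x ≤ b
        rw [div_le_iff₀ hx0, mul_comm]
        exact mul_le_mul_of_nonneg_left hx.1 hb0.le
    have := integral_comp_mul_deriv' (a := 0) (b := 2) (f := k) (f' := fun u => k u * (L / 2))
      (g := fun x => (f x / x) * f (a * b / x)) (fun u _ => hkd u)
      (by fun_prop)
      (hg.mono (by
        rintro _ ⟨u, hu, rfl⟩
        rw [uIcc_of_le zero_le_two] at hu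
        exact hkmem u hu))
    rw [hk0, hk2] at this
    rw [← this, ← intervalIntegral.integral_const_mul]
    congr 1
    ext u
    have : k u ≠ 0 := (geo_pos a b u).ne'
    simp only [Function.comp, hG, hφ, hks]
    field_simp
  -- `G` is symmetric about `1`.
  have hsym : ∫ u in (0:ℝ)..2, G u = 2 * ∫ u in (0:ℝ)..1, G u := by
    have h1 : ∫ u in (1:ℝ)..2, G u = ∫ u in (0:ℝ)..1, G u := by
      have h := intervalIntegral.integral_comp_sub_left (a := 0) (b := 1) G 2
      rw [sub_zero, show (2:ℝ) - 1 = 1 by norm_num] at h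
      rw [← h]
      congr 1
      ext u
      simp only [hG, sub_sub_cancel]
      ring
    rw [← integral_add_adjacent_intervals (b := 1), h1, two_mul]
    · exact (hGc.mono (by
        rw [uIcc_of_le zero_le_one]
        exact Icc_subset_Icc_right one_le_two)).intervalIntegrable
    · exact (hGc.mono (by
        rw [uIcc_of_le one_le_two]
        exact Icc_subset_Icc_left zero_le_one)).intervalIntegrable
  set A := a * |f' a| ^ s with hA
  set B := b * |f' b| ^ s with hB
  have hA0 : 0 ≤ A := by positivity
  have hB0 : 0 ≤ B := by positivity
  have hptw : ∀ u ∈ Ioo (0:ℝ) 2, |f' (k u)| * k u ≤ A ^ (1 - u / 2) * B ^ (u / 2) := by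
    intro u hu
    have hl : 1 - u / 2 ∈ Ioo (0:ℝ) 1 := ⟨by linarith [hu.2], by linarith [hu.1]⟩
    have := deriv_mul_le ha0 hb0 hq hs hl
      (hconv a (left_mem_Icc.2 hab.le) b (right_mem_Icc.2 hab.le) _ ⟨hl.1.le, hl.2.le⟩) hfa hfb
    rwa [sub_sub_cancel, ← geo_eq ha0 hb0] at this
  have hM₁0 : ∀ u ∈ Icc (0:ℝ) 1, |φ u| ≤ M₁ := fun u hu =>
    hM₁.2 ⟨k u, ⟨hk0 ▸ hmono hu.1, hk1 ▸ hmono hu.2⟩, rfl⟩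
  have hM₂0 : ∀ u ∈ Icc (0:ℝ) 1, |φ (2 - u)| ≤ M₂ := fun u hu =>
    hM₂.2 ⟨k (2 - u), ⟨hk1 ▸ hmono (by linarith [hu.2]), hk2 ▸ hmono (by linarith [hu.1])⟩, rfl⟩
  have hM₁n : 0 ≤ M₁ := (abs_nonneg _).trans (hM₁0 0 (by simp))
  have hM₂n : 0 ≤ M₂ := (abs_nonneg _).trans (hM₂0 0 (by simp))
  set E : ℝ → ℝ := fun u => L / 2 * (M₂ * (A ^ (1 - u / 2) * B ^ (u / 2))
    + M₁ * (B ^ (1 - u / 2) * A ^ (u / 2))) with hE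
  have hAB := intervalIntegrable_geom hA0 hB0
  have hBA := intervalIntegrable_geom hB0 hA0
  have hEi : IntervalIntegrable E volume 0 1 :=
    ((hAB.const_mul M₂).add (hBA.const_mul M₁)).const_mul (L / 2)
  have hDE : ∀ u ∈ Ioc (0:ℝ) 1, |D u| ≤ E u := by
    intro u hu
    have h1 := hptw u ⟨hu.1, by linarith [hu.2]⟩
    have h2 := hptw (2 - u) ⟨by linarith [hu.2], by linarith [hu.1]⟩
    have e1 : 1 - (2 - u) / 2 = u / 2 := by ring
    have e2 : (2 - u) / 2 = 1 - u / 2 := by ring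
    rw [e1, e2, mul_comm (A ^ _)] at h2
    have hu' : u ∈ Icc (0:ℝ) 1 := ⟨hu.1.le, hu.2⟩
    have p1 := geo_pos a b u
    have p2 := geo_pos a b (2 - u)
    calc |D u| ≤ |f' (k u) * (k u * (L / 2)) * φ (2 - u)|
          + |φ u * (f' (k (2 - u)) * (k (2 - u) * (L / 2)))| := abs_sub _ _
      _ = L / 2 * (|φ (2 - u)| * (|f' (k u)| * k u)
          + |φ u| * (|f' (k (2 - u))| * k (2 - u))) := by
        simp only [abs_mul]
        rw [abs_of_pos p1, abs_of_pos p2, abs_of_pos (half_pos hL)]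
        ring
      _ ≤ E u := by
        refine mul_le_mul_of_nonneg_left (add_le_add ?_ ?_) (half_pos hL).le
        · exact mul_le_mul (hM₂0 u hu') h1 (by positivity) hM₂n
        · exact mul_le_mul (hM₁0 u hu') h2 (by positivity) hM₁n
  -- Measurability of `D` comes for free, since it agrees with `deriv G` on the interval.
  have hDi : IntervalIntegrable D volume 0 1 := by
    rw [intervalIntegrable_iff_integrableOn_Ioc_of_le zero_le_one] at hEi ⊢
    refine Integrable.mono' hEi ?_ ?_
    · refine ((measurable_deriv G).aestronglyMeasurable).congr ?_
      filter_upwards [ae_restrict_mem measurableSet_Ioc] with u hu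
      exact (hGd u ⟨hu.1.le, hu.2.trans one_le_two⟩).deriv
    · filter_upwards [ae_restrict_mem measurableSet_Ioc] with u hu using hDE u hu
  have hparts : G 1 - ∫ u in (0:ℝ)..1, G u = ∫ u in (0:ℝ)..1, u * D u := by
    rw [integral_mul_deriv_eq_deriv_mul (u := fun u => u) (u' := fun _ => 1) (v := G)
      (fun u _ => hasDerivAt_id u)
      (fun u hu => by
        rw [uIcc_of_le zero_le_one] at hu
        exact hGd u ⟨hu.1, hu.2.trans one_le_two⟩)
      (by simp) hDi]
    simp
  have hLHS : f (Real.sqrt (a*b)) ^ 2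
      - (1 / L) * ∫ x in a..b, (f x / x) * f (a * b / x) = ∫ u in (0:ℝ)..1, u * D u := by
    rw [hsubst, hsym, ← hparts]
    have : G 1 = f (Real.sqrt (a*b)) ^ 2 := by
      simp only [hG, hφ]
      norm_num [hk1, sq]
    rw [this]
    field_simp
  rw [hLHS]
  have hlog : Real.log (b / a) = L := Real.log_div hb0.ne' ha0.ne'
  have hcid : ContinuousOn (fun u : ℝ => u) (uIcc 0 1) := continuousOn_id
  have hAB' := hAB.continuousOn_mul hcid
  have hBA' := hBA.continuousOn_mul hcid
  have hsplit : ∫ u in (0:ℝ)..1, u * E u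
      = L / 2 * (M₂ * (∫ u in (0:ℝ)..1, u * (A ^ (1 - u / 2) * B ^ (u / 2)))
        + M₁ * ∫ u in (0:ℝ)..1, u * (B ^ (1 - u / 2) * A ^ (u / 2))) := by
    rw [← intervalIntegral.integral_const_mul, ← intervalIntegral.integral_const_mul,
      ← intervalIntegral.integral_add (hAB'.const_mul M₂) (hBA'.const_mul M₁),
      ← intervalIntegral.integral_const_mul]
    congr 1
    ext u
    simp only [hE]
    ring
  have hle : |∫ u in (0:ℝ)..1, u * D u| ≤ ∫ u in (0:ℝ)..1, u * E u := by
    rw [← Real.norm_eq_abs]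
    refine intervalIntegral.norm_integral_le_of_norm_le zero_le_one ?_ (hEi.continuousOn_mul hcid)
    refine Filter.Eventually.of_forall fun u hu => ?_
    rw [Real.norm_eq_abs, abs_mul, abs_of_pos hu.1]
    exact mul_le_mul_of_nonneg_left (hDE u hu) hu.1.le
  rw [hsplit] at hle
  refine hle.trans ?_
  rw [hlog]
  calc _ ≤ L / 2 * (M₂ * (((q - 1) / (2 * q - 1)) ^ (1 - 1 / q)
          * (A * (h₃ ((B / A) ^ (q / 2))) ^ (1 / q)))
        + M₁ * (((q - 1) / (2 * q - 1)) ^ (1 - 1 / q)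
          * (B * (h₃ ((A / B) ^ (q / 2))) ^ (1 / q)))) :=
        mul_le_mul_of_nonneg_left (add_le_add
          (mul_le_mul_of_nonneg_left (integral_geom_le hq hA0 hB0) hM₂n)
          (mul_le_mul_of_nonneg_left (integral_geom_le hq hB0 hA0) hM₁n)) (half_pos hL).le
    _ = _ := by ring
end

section
/- Let f : I ⊆ (0,∞) → (0,∞) be geometrically convex and continuous on [a,b], where 0 < a < b. Then f(√(ab))² ≤ (1/(ln b − ln a)) ∫_a^b (f(x)/x)·f(ab/x) dx ≤ f(a)·f(b). (These Hermite–Hadamard-type inequalities hold without any monotonicity assumption on f.) -/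
/-!
The reflection `x ↦ a * b / x` of `[a, b]` has the geometric mean of `x` and `a * b / x` constantly
equal to `√(a * b)`. Geometric convexity therefore gives, for every `x ∈ [a, b]`,
`f (√(a * b)) ^ 2 ≤ f x * f (a * b / x) ≤ f a * f b`:
the left bound is the case `l = 1 / 2` at the points `x`, `a * b / x`, and the right one is the
product of the convexity inequalities at `x = a ^ l * b ^ (1 - l)` and
`a * b / x = a ^ (1 - l) * b ^ l`. Integrating against `dx / x`, which has total mass
`log b - log a` on `[a, b]`, yields both claims.
-/

open Real MeasureTheory Set intervalIntegral

lemma reflect_mem {a b x : ℝ} (ha : 0 < a) (hx : x ∈ Set.Icc a b) :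
    a * b / x ∈ Set.Icc a b := by
  have hx0 : 0 < x := ha.trans_le hx.1
  constructor
  · rw [le_div_iff₀ hx0]
    exact mul_le_mul_of_nonneg_left hx.2 ha.le
  · rw [div_le_iff₀ hx0]
    nlinarith [mul_le_mul_of_nonneg_right hx.1 (hx0.le.trans hx.2)]

lemma sq_sqrt_le_reflect {f : ℝ → ℝ} {a b x : ℝ} (ha : 0 < a)
    (hpos : ∀ x ∈ Set.Icc a b, 0 < f x)
    (hconv : ∀ x ∈ Set.Icc a b, ∀ y ∈ Set.Icc a b, ∀ l ∈ Set.Icc (0:ℝ) 1,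
      f (x ^ l * y ^ (1 - l)) ≤ f x ^ l * f y ^ (1 - l))
    (hx : x ∈ Set.Icc a b) :
    f (Real.sqrt (a * b)) ^ 2 ≤ f x * f (a * b / x) := by
  have hx0 : 0 < x := ha.trans_le hx.1
  have hb : 0 < b := hx0.trans_le hx.2
  have hy := reflect_mem ha hx
  have hy0 : 0 < a * b / x := ha.trans_le hy.1
  have h := hconv x hx _ hy (1 / 2) (by norm_num)
  rw [show (1 : ℝ) - 1 / 2 = 1 / 2 by norm_num, ← Real.mul_rpow hx0.le hy0.le,
    ← Real.mul_rpow (hpos x hx).le (hpos _ hy).le, ← Real.sqrt_eq_rpow, ← Real.sqrt_eq_rpow,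
    mul_div_cancel₀ _ hx0.ne'] at h
  have hmem : Real.sqrt (a * b) ∈ Set.Icc a b := by
    have hab : a ≤ b := hx.1.trans hx.2
    constructor
    · exact Real.le_sqrt_of_sq_le (by nlinarith)
    · exact Real.sqrt_le_iff.2 ⟨hb.le, by nlinarith⟩
  exact (Real.le_sqrt' (hpos _ hmem)).1 h

lemma reflect_le_endpoints {f : ℝ → ℝ} {a b x : ℝ} (ha : 0 < a) (hab : a < b)
    (hpos : ∀ x ∈ Set.Icc a b, 0 < f x)
    (hconv : ∀ x ∈ Set.Icc a b, ∀ y ∈ Set.Icc a b, ∀ l ∈ Set.Icc (0:ℝ) 1,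
      f (x ^ l * y ^ (1 - l)) ≤ f x ^ l * f y ^ (1 - l))
    (hx : x ∈ Set.Icc a b) :
    f x * f (a * b / x) ≤ f a * f b := by
  have hx0 : 0 < x := ha.trans_le hx.1
  have hb : 0 < b := ha.trans hab
  have hma : a ∈ Set.Icc a b := ⟨le_rfl, hab.le⟩
  have hmb : b ∈ Set.Icc a b := ⟨hab.le, le_rfl⟩
  have hL : 0 < Real.log b - Real.log a := sub_pos.2 (Real.log_lt_log ha hab)
  -- the exponent `l` with `x = a ^ l * b ^ (1 - l)`, found by taking logarithms
  obtain ⟨l, hl⟩ : ∃ l, l = (Real.log b - Real.log x) / (Real.log b - Real.log a) := ⟨_, rfl⟩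
  have hl0 : 0 ≤ l := by
    rw [hl]
    exact div_nonneg (sub_nonneg.2 (Real.log_le_log hx0 hx.2)) hL.le
  have hl1 : l ≤ 1 := by
    rw [hl, div_le_one hL]
    linarith [Real.log_le_log ha hx.1]
  have hlL : l * (Real.log b - Real.log a) = Real.log b - Real.log x := by
    rw [hl]
    exact div_mul_cancel₀ _ hL.ne'
  have hxe : a ^ l * b ^ (1 - l) = x := by
    rw [Real.rpow_def_of_pos ha, Real.rpow_def_of_pos hb, ← Real.exp_add,
      ← Real.exp_log hx0]
    congr 1
    linarith
  have hye : a ^ (1 - l) * b ^ (1 - (1 - l)) = a * b / x := by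
    rw [eq_div_iff hx0.ne']
    rw [← hxe]
    rw [sub_sub_cancel]
    calc a ^ (1 - l) * b ^ l * (a ^ l * b ^ (1 - l))
        = (a ^ (1 - l) * a ^ l) * (b ^ l * b ^ (1 - l)) := by ring
      _ = a * b := by
        rw [← Real.rpow_add ha, ← Real.rpow_add hb]
        simp
  have h1 := hconv a hma b hmb l ⟨hl0, hl1⟩
  have h2 := hconv a hma b hmb (1 - l) ⟨by linarith, by linarith⟩
  rw [hxe] at h1
  rw [hye, sub_sub_cancel] at h2
  have fa := hpos a hma
  have fb := hpos b hmb
  calc f x * f (a * b / x)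
      ≤ (f a ^ l * f b ^ (1 - l)) * (f a ^ (1 - l) * f b ^ l) :=
        mul_le_mul h1 h2 (hpos _ (reflect_mem ha hx)).le (by positivity)
    _ = (f a ^ l * f a ^ (1 - l)) * (f b ^ (1 - l) * f b ^ l) := by ring
    _ = f a * f b := by
      rw [← Real.rpow_add fa, ← Real.rpow_add fb]
      simp

theorem stmt_18 (f : ℝ → ℝ) (a b : ℝ) (ha : 0 < a) (hab : a < b)
    (hpos : ∀ x ∈ Set.Icc a b, 0 < f x)
    (hcont : ContinuousOn f (Set.Icc a b))
    (hconv : ∀ x ∈ Set.Icc a b, ∀ y ∈ Set.Icc a b, ∀ l ∈ Set.Icc (0:ℝ) 1,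
      f (x ^ l * y ^ (1 - l)) ≤ f x ^ l * f y ^ (1 - l)) :
    f (Real.sqrt (a*b)) ^ 2
        ≤ (1 / (Real.log b - Real.log a)) * ∫ x in a..b, (f x / x) * f (a * b / x)
      ∧ (1 / (Real.log b - Real.log a)) * (∫ x in a..b, (f x / x) * f (a * b / x))
        ≤ f a * f b := by
  have hb : 0 < b := ha.trans hab
  have hL : 0 < Real.log b - Real.log a := sub_pos.2 (Real.log_lt_log ha hab)
  have hne : ∀ x ∈ Set.Icc a b, x ≠ 0 := fun x hx => (ha.trans_le hx.1).ne'
  have hint : IntervalIntegrable (fun x => (f x / x) * f (a * b / x)) volume a b := by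
    apply ContinuousOn.intervalIntegrable
    rw [Set.uIcc_of_le hab.le]
    exact (hcont.div continuousOn_id hne).mul
      (hcont.comp (continuousOn_const.div continuousOn_id hne) fun x hx => reflect_mem ha hx)
  have hconst : ∀ c : ℝ, IntervalIntegrable (fun x => c * x⁻¹) volume a b := by
    intro c
    apply ContinuousOn.intervalIntegrable
    rw [Set.uIcc_of_le hab.le]
    exact continuousOn_const.mul (continuousOn_id.inv₀ hne)
  have hval : ∀ c : ℝ, ∫ x in a..b, c * x⁻¹ = c * (Real.log b - Real.log a) := by
    intro c
    rw [intervalIntegral.integral_const_mul, integral_inv_of_pos ha hb,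
      Real.log_div hb.ne' ha.ne']
  have hform : ∀ x, (f x / x) * f (a * b / x) = (f x * f (a * b / x)) * x⁻¹ := by
    intro x
    ring
  rw [one_div, inv_mul_eq_div, le_div_iff₀ hL, div_le_iff₀ hL, ← hval, ← hval]
  constructor
  · refine intervalIntegral.integral_mono_on hab.le (hconst _) hint fun x hx => ?_
    rw [hform]
    exact mul_le_mul_of_nonneg_right (sq_sqrt_le_reflect ha hpos hconv hx)
      (inv_nonneg.2 (ha.le.trans hx.1))
  · refine intervalIntegral.integral_mono_on hab.le hint (hconst _) fun x hx => ?_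
    rw [hform]
    exact mul_le_mul_of_nonneg_right (reflect_le_endpoints ha hab hpos hconv hx)
      (inv_nonneg.2 (ha.le.trans hx.1))
end
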